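/- arXiv:0901.4056 — 2 statements merged into one kernel-verified Lean document; each statement's English description precedes it below -/
import Mathlib

section
/- Fix δ ∈ (0,1). There exist constants ε > 0 and A > 0 such that the following holds for all sufficiently large n. In the relaxed adaptive allocation model with ⌊(1−δ)n⌋ balls and n bins, pool size at most 2^m with m ≥ log n, all pool distributions having point masses at most k/n, and k·m ≤ ε·n: with probability at least 1 − A·n^{−4}, the number of collisions satisfies Col_2(⌊(1−δ)n⌋) ≥ (1−δ)²·n/16. In particular, any such algorithm incurs Ω(n) collisions with high probability. -/
open MeasureTheory Finset

/-- The load of bin `i` after `t` rounds, when ball `s` is placed in bin `J s ω`. -/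
def binLoad {Ω : Type*} {n : ℕ} (J : ℕ → Ω → Fin n) (t : ℕ) (i : Fin n) (ω : Ω) : ℕ :=
  ((Finset.range t).filter fun s => J s ω = i).card

/-- The number of collisions (pairs of balls sharing a bin) after `t` rounds. -/
def collisions {Ω : Type*} {n : ℕ} (J : ℕ → Ω → Fin n) (t : ℕ) (ω : Ω) : ℕ :=
  ∑ i, Nat.choose (binLoad J t i ω) 2

/-!
Compare the sum of a bounded adapted process with half of its compensator: since
`exp (-x) ≤ 1 - x / 2` on `[0, 1]`, the exponential of (half the compensator minus the sum) is a
supermartingale, so the sum falls short of half the compensator by `a` times the bound with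
probability at most `exp (-a)`. This is used twice. For a fixed strategy `ν` and the process
`ν (J t)`, bounded by `k / n`, a union bound over the `2 ^ m` strategies and the rounds shows that
the mass of every strategy on the past positions is at least about half of its correlation with the
strategies played before. For the process of loads hit by the balls, whose sum is the number of
collisions and which is of order `√n` unless there are many collisions, it shows that the collisions
are at least about half of the total mass that the strategies played put on the past positions.
Finally, the correlations of the strategies played sum to at least about `T ^ 2 / (2 n)` over pairs
of rounds by the Cauchy–Schwarz inequality, because the diagonal is negligible.
-/

section Loads

variable {Ω : Type*} {n : ℕ} (J : ℕ → Ω → Fin n) (t : ℕ) (ω : Ω)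

lemma binLoad_succ (i : Fin n) :
    binLoad J (t + 1) i ω = binLoad J t i ω + if J t ω = i then 1 else 0 := by
  simp only [binLoad, card_filter, sum_range_succ]

lemma binLoad_mono (i : Fin n) : Monotone fun t => binLoad J t i ω :=
  fun _ _ h => card_le_card (filter_subset_filter _ (range_subset_range.2 h))

lemma collisions_succ :
    collisions J (t + 1) ω = collisions J t ω + binLoad J t (J t ω) ω := by
  have h_choose (i : Fin n) : (binLoad J (t + 1) i ω).choose 2 =
      (binLoad J t i ω).choose 2 + if J t ω = i then binLoad J t i ω else 0 := by
    rw [binLoad_succ]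
    split_ifs
    · rw [Nat.choose_succ_succ' _ 1, Nat.choose_one_right, add_comm]
    · rfl
  simp only [collisions, h_choose, sum_add_distrib, sum_ite_eq, mem_univ, if_true]

lemma collisions_eq_sum_binLoad :
    collisions J t ω = ∑ s ∈ range t, binLoad J s (J s ω) ω := by
  induction t with
  | zero => simp [collisions, binLoad]
  | succ t ih => rw [sum_range_succ, ← ih, collisions_succ]

lemma dotProduct_binLoad (q : Fin n → ℝ) :
    (q ⬝ᵥ fun i => (binLoad J t i ω : ℝ)) = ∑ s ∈ range t, q (J s ω) := by
  simp only [dotProduct, binLoad, card_filter, Nat.cast_sum, mul_sum]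
  rw [sum_comm]
  simp

lemma binLoad_le_one_add_sqrt_collisions (i : Fin n) :
    (binLoad J t i ω : ℝ) ≤ 1 + √(2 * collisions J t ω) := by
  have h_choose : (((binLoad J t i ω).choose 2 : ℕ) : ℝ) ≤ collisions J t ω := by
    exact_mod_cast single_le_sum (f := fun i => (binLoad J t i ω).choose 2)
      (fun _ _ => Nat.zero_le _) (mem_univ i)
  rw [Nat.cast_choose_two] at h_choose
  rcases (binLoad J t i ω).eq_zero_or_pos with h_zero | h_pos
  · rw [h_zero, Nat.cast_zero]
    positivity
  · have h_one : (1 : ℝ) ≤ binLoad J t i ω := by exact_mod_cast h_pos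
    rw [← sub_le_iff_le_add']
    exact Real.le_sqrt_of_sq_le (by nlinarith)

end Loads

section Correlation

lemma two_mul_sum_range_mul_sum_range {R : Type*} [CommRing R] (x : ℕ → R) (T : ℕ) :
    2 * ∑ t ∈ range T, x t * ∑ s ∈ range t, x s =
      (∑ t ∈ range T, x t) ^ 2 - ∑ t ∈ range T, x t ^ 2 := by
  induction T with
  | zero => simp
  | succ T ih =>
    simp only [sum_range_succ, mul_add, ih]
    ring

variable {ι : Type*} [Fintype ι] {κ : ℝ}

lemma pos_of_mem_stdSimplex_of_le {ν : ι → ℝ} (hν : ν ∈ stdSimplex ℝ ι) (hκ : ∀ i, ν i ≤ κ) :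
    0 < κ := by
  obtain ⟨i, -, hi⟩ : ∃ i ∈ univ, (0 : ℝ) < ν i :=
    exists_lt_of_sum_lt (by simpa only [sum_const_zero, hν.2] using zero_lt_one' ℝ)
  exact hi.trans_le (hκ i)

lemma dotProduct_self_le_of_mem_stdSimplex {ν : ι → ℝ} (hν : ν ∈ stdSimplex ℝ ι)
    (hκ : ∀ i, ν i ≤ κ) : ν ⬝ᵥ ν ≤ κ :=
  calc ν ⬝ᵥ ν ≤ ∑ i, ν i * κ := sum_le_sum fun i _ => mul_le_mul_of_nonneg_left (hκ i) (hν.1 i)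
    _ = κ := by rw [← sum_mul, hν.2, one_mul]

lemma sq_div_card_sub_le_two_mul_sum_dotProduct {q : ℕ → ι → ℝ}
    (hq : ∀ t, q t ∈ stdSimplex ℝ ι) (hκ : ∀ t i, q t i ≤ κ) (T : ℕ) :
    (T : ℝ) ^ 2 / Fintype.card ι - T * κ ≤
      2 * ∑ t ∈ range T, ∑ s ∈ range t, q s ⬝ᵥ q t := by
  have h_pairs : 2 * ∑ t ∈ range T, ∑ s ∈ range t, q s ⬝ᵥ q t =
      ∑ i, (∑ t ∈ range T, q t i) ^ 2 - ∑ t ∈ range T, q t ⬝ᵥ q t := by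
    have h_coord := sum_congr rfl fun i (_ : i ∈ (univ : Finset ι)) =>
      two_mul_sum_range_mul_sum_range (fun t => q t i) T
    rw [← mul_sum, sum_sub_distrib, sum_comm, sum_comm (t := range T)] at h_coord
    simp only [dotProduct, ← sq]
    rw [← h_coord]
    congr! 2 with t
    rw [sum_comm]
    simp only [mul_sum, mul_comm]
  have h_cauchy : (T : ℝ) ^ 2 / Fintype.card ι ≤ ∑ i, (∑ t ∈ range T, q t i) ^ 2 := by
    have h_mass : ∑ i, ∑ t ∈ range T, q t i = T := by
      rw [sum_comm, sum_congr rfl fun t _ => (hq t).2]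
      simp
    refine div_le_of_le_mul₀ (Nat.cast_nonneg _) (sum_nonneg fun i _ => sq_nonneg _) ?_
    rw [← h_mass, mul_comm, ← card_univ]
    exact sq_sum_le_card_mul_sum_sq
  have h_diag : ∑ t ∈ range T, q t ⬝ᵥ q t ≤ T * κ := by
    simpa using sum_le_card_nsmul (range T) (fun t => q t ⬝ᵥ q t) κ fun t _ =>
      dotProduct_self_le_of_mem_stdSimplex (hq t) (hκ t)
  linarith

lemma le_collisions_of_le_sum {Ω : Type*} {n : ℕ} {J : ℕ → Ω → Fin n} {ω : Ω}
    {q : ℕ → Fin n → ℝ} {T : ℕ} {a b : ℝ} (hq : ∀ t, q t ∈ stdSimplex ℝ (Fin n))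
    (hκ : ∀ t i, q t i ≤ κ)
    (h_strategy : ∀ t < T,
      (∑ s ∈ range t, q s ⬝ᵥ q t) / 2 - a ≤ ∑ s ∈ range t, q t (J s ω))
    (h_collisions : (∑ t ∈ range T, q t ⬝ᵥ fun i => (binLoad J t i ω : ℝ)) / 2 - b ≤
      collisions J T ω) :
    ((T : ℝ) ^ 2 / n - T * κ) / 8 - T * a / 2 - b ≤ collisions J T ω := by
  have h_pairs := sq_div_card_sub_le_two_mul_sum_dotProduct hq hκ T
  have h_sum := sum_le_sum fun t ht => h_strategy t (mem_range.1 ht)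
  rw [sum_sub_distrib, ← sum_div, sum_const, card_range, nsmul_eq_mul] at h_sum
  rw [Fintype.card_fin] at h_pairs
  simp only [dotProduct_binLoad] at h_collisions
  linarith

end Correlation

section LowerTail

lemma exp_neg_le_one_sub_half {x : ℝ} (hx : x ∈ Set.Icc 0 1) : Real.exp (-x) ≤ 1 - x / 2 := by
  rw [Real.exp_neg]
  refine inv_le_of_inv_le₀ (by linarith [hx.2]) (le_trans ?_ (Real.add_one_le_exp x))
  rw [inv_le_iff_one_le_mul₀ (by linarith [hx.2])]
  nlinarith [hx.1, hx.2]

variable {Ω : Type*} {m mΩ : MeasurableSpace Ω} {μ : Measure Ω}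

lemma integrable_exp_neg [IsFiniteMeasure μ] {X : Ω → ℝ} (hX : AEMeasurable X μ)
    (hX0 : ∀ᵐ ω ∂μ, 0 ≤ X ω) : Integrable (fun ω => Real.exp (-X ω)) μ := by
  refine .of_mem_Icc 0 1 (Real.measurable_exp.comp_aemeasurable hX.neg) ?_
  filter_upwards [hX0] with ω hω
  exact ⟨(Real.exp_pos _).le, Real.exp_le_one_iff.2 (neg_nonpos.2 hω)⟩

lemma condExp_exp_neg_le [IsFiniteMeasure μ] (hm : m ≤ mΩ) {X : Ω → ℝ} (hX : AEMeasurable X μ)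
    (hX01 : ∀ᵐ ω ∂μ, X ω ∈ Set.Icc 0 1) :
    μ[fun ω => Real.exp (-X ω) | m] ≤ᵐ[μ] fun ω => Real.exp (-(μ[X | m] ω / 2)) := by
  have hX_int : Integrable X μ := .of_mem_Icc 0 1 hX hX01
  have h_affine : μ[fun ω => 1 - X ω / 2 | m] =ᵐ[μ] fun ω => 1 - μ[X | m] ω / 2 := by
    filter_upwards [condExp_sub (integrable_const (1 : ℝ)) (hX_int.smul (2⁻¹ : ℝ)) m,
      condExp_smul (2⁻¹ : ℝ) X m] with ω h_sub h_smul
    simp only [Pi.sub_apply, h_smul, condExp_const hm, Pi.smul_apply, smul_eq_mul] at h_sub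
    rw [div_eq_inv_mul, ← h_sub]
    congr! 3 with ω
    simp [div_eq_inv_mul]
  have h_mono : μ[fun ω => Real.exp (-X ω) | m] ≤ᵐ[μ] μ[fun ω => 1 - X ω / 2 | m] :=
    condExp_mono (integrable_exp_neg hX (hX01.mono fun _ h => h.1))
      ((integrable_const 1).sub (hX_int.div_const 2)) (hX01.mono fun _ => exp_neg_le_one_sub_half)
  filter_upwards [h_mono, h_affine] with ω h_le h_eq
  exact (h_le.trans_eq h_eq).trans (Real.one_sub_le_exp_neg _)

/-- The exponential process `exp (∑_{s < t} (𝔼[X s | ℱ s] / 2 - X s))` comparing a process `X`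
with half of its compensator. It is a supermartingale when `X` takes values in `[0, 1]`, where
`X s` is revealed at time `s + 1`. -/
noncomputable def halfCompensatedExp (μ : Measure Ω) (ℱ : Filtration ℕ mΩ) (X : ℕ → Ω → ℝ)
    (t : ℕ) (ω : Ω) : ℝ :=
  Real.exp (∑ s ∈ range t, (μ[X s | ℱ s] ω / 2 - X s ω))

variable {ℱ : Filtration ℕ mΩ} {X : ℕ → Ω → ℝ}

lemma stronglyAdapted_halfCompensatedExp (hX : ∀ t, Measurable[ℱ (t + 1)] (X t)) :
    StronglyAdapted ℱ (halfCompensatedExp μ ℱ X) := fun t => by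
  refine (Real.measurable_exp.comp (Finset.measurable_sum _ fun s hs => ?_)).stronglyMeasurable
  have hst : s + 1 ≤ t := mem_range.1 hs
  have h_condExp : Measurable[ℱ t] (μ[X s | ℱ s]) :=
    stronglyMeasurable_condExp.measurable.mono (ℱ.mono (s.le_succ.trans hst)) le_rfl
  exact (h_condExp.div_const 2).sub ((hX s).mono (ℱ.mono hst) le_rfl)

variable [IsFiniteMeasure μ]

lemma integrable_halfCompensatedExp (hX : ∀ t, Measurable[ℱ (t + 1)] (X t))
    (hX01 : ∀ t, ∀ᵐ ω ∂μ, X t ω ∈ Set.Icc 0 1) (t : ℕ) :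
    Integrable (halfCompensatedExp μ ℱ X t) μ := by
  have hX_ae (s : ℕ) : AEMeasurable (X s) μ := ((hX s).mono (ℱ.le _) le_rfl).aemeasurable
  have h_condExp (s : ℕ) : ∀ᵐ ω ∂μ, μ[X s | ℱ s] ω ∈ Set.Icc 0 1 :=
    (convex_Icc 0 1).condExp_mem (ℱ.le s) (.of_mem_Icc 0 1 (hX_ae s) (hX01 s)) isClosed_Icc (hX01 s)
  refine .of_mem_Icc 0 (Real.exp t)
    ((stronglyAdapted_halfCompensatedExp hX t).measurable.mono (ℱ.le t) le_rfl).aemeasurable ?_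
  filter_upwards [ae_all_iff.2 hX01, ae_all_iff.2 h_condExp] with ω hω h_condExp_ω
  refine ⟨(Real.exp_pos _).le, Real.exp_le_exp.2 ?_⟩
  calc ∑ s ∈ range t, (μ[X s | ℱ s] ω / 2 - X s ω) ≤ ∑ _ ∈ range t, (1 : ℝ) :=
        sum_le_sum fun s _ => by linarith [(hω s).1, (h_condExp_ω s).2]
    _ = t := by simp

lemma supermartingale_halfCompensatedExp (hX : ∀ t, Measurable[ℱ (t + 1)] (X t))
    (hX01 : ∀ t, ∀ᵐ ω ∂μ, X t ω ∈ Set.Icc 0 1) :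
    Supermartingale (halfCompensatedExp μ ℱ X) ℱ μ := by
  have h_int := integrable_halfCompensatedExp hX hX01
  refine supermartingale_nat (stronglyAdapted_halfCompensatedExp hX) h_int fun t => ?_
  have hX_ae : AEMeasurable (X t) μ := ((hX t).mono (ℱ.le _) le_rfl).aemeasurable
  set past : Ω → ℝ := fun ω => halfCompensatedExp μ ℱ X t ω * Real.exp (μ[X t | ℱ t] ω / 2)
  have h_past : StronglyMeasurable[ℱ t] past :=
    (stronglyAdapted_halfCompensatedExp hX t).mul
      (Real.measurable_exp.comp
        (stronglyMeasurable_condExp.measurable.div_const 2)).stronglyMeasurable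
  have h_succ : halfCompensatedExp μ ℱ X (t + 1) = past * fun ω => Real.exp (-X t ω) := by
    ext ω
    simp only [past, halfCompensatedExp, Pi.mul_apply, sum_range_succ, ← Real.exp_add]
    ring_nf
  have h_pull := condExp_mul_of_stronglyMeasurable_left h_past (h_succ ▸ h_int (t + 1))
    (integrable_exp_neg hX_ae ((hX01 t).mono fun _ h => h.1))
  rw [h_succ]
  filter_upwards [h_pull, condExp_exp_neg_le (ℱ.le t) hX_ae (hX01 t)] with ω h_eq h_le
  calc (μ[past * fun ω => Real.exp (-X t ω) | ℱ t]) ω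
      = past ω * μ[fun ω => Real.exp (-X t ω) | ℱ t] ω := h_eq
    _ ≤ past ω * Real.exp (-(μ[X t | ℱ t] ω / 2)) :=
        mul_le_mul_of_nonneg_left h_le (by simp only [past, halfCompensatedExp]; positivity)
    _ = halfCompensatedExp μ ℱ X t ω := by
        rw [mul_assoc, ← Real.exp_add, add_neg_cancel, Real.exp_zero, mul_one]

lemma integral_halfCompensatedExp_le (hX : ∀ t, Measurable[ℱ (t + 1)] (X t))
    (hX01 : ∀ t, ∀ᵐ ω ∂μ, X t ω ∈ Set.Icc 0 1) (t : ℕ) :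
    ∫ ω, halfCompensatedExp μ ℱ X t ω ∂μ ≤ μ.real Set.univ := by
  simpa [halfCompensatedExp] using
    (supermartingale_halfCompensatedExp hX hX01).setIntegral_le t.zero_le MeasurableSet.univ

lemma measureReal_sum_lt_half_sum_condExp_sub_le (hX : ∀ t, Measurable[ℱ (t + 1)] (X t))
    {M : ℝ} (hM : 0 < M) (hXM : ∀ t, ∀ᵐ ω ∂μ, X t ω ∈ Set.Icc 0 M) (T : ℕ) (a : ℝ) :
    μ.real {ω | ∑ t ∈ range T, X t ω < (∑ t ∈ range T, μ[X t | ℱ t] ω) / 2 - a * M} ≤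
      μ.real Set.univ * Real.exp (-a) := by
  set Y : ℕ → Ω → ℝ := fun t => M⁻¹ • X t with hY_def
  have hY (t : ℕ) : Measurable[ℱ (t + 1)] (Y t) := (hX t).const_smul M⁻¹
  have hY01 (t : ℕ) : ∀ᵐ ω ∂μ, Y t ω ∈ Set.Icc 0 1 := by
    filter_upwards [hXM t] with ω hω
    simp only [hY_def, Pi.smul_apply, smul_eq_mul, ← div_eq_inv_mul]
    exact ⟨div_nonneg hω.1 hM.le, div_le_one_of_le₀ hω.2 hM.le⟩
  have h_condExp : ∀ᵐ ω ∂μ, ∀ t, μ[Y t | ℱ t] ω = M⁻¹ * μ[X t | ℱ t] ω :=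
    ae_all_iff.2 fun t => condExp_smul M⁻¹ (X t) (ℱ t)
  have h_markov := mul_meas_ge_le_integral_of_nonneg (ae_of_all _ fun _ => Real.exp_nonneg _)
    (integrable_halfCompensatedExp hY hY01 T) (Real.exp a)
  have h_sub : μ.real {ω | ∑ t ∈ range T, X t ω <
      (∑ t ∈ range T, μ[X t | ℱ t] ω) / 2 - a * M} ≤
      μ.real {ω | Real.exp a ≤ halfCompensatedExp μ ℱ Y T ω} := by
    refine ENNReal.toReal_mono (measure_ne_top _ _) (measure_mono_ae ?_)
    filter_upwards [h_condExp] with ω hω h_lt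
    refine Real.exp_le_exp.2 ?_
    simp only [hω, sum_sub_distrib, ← sum_div, ← mul_sum]
    simp only [hY_def, Pi.smul_apply, smul_eq_mul, ← mul_sum]
    rw [mul_div_assoc, ← mul_sub, le_inv_mul_iff₀ hM]
    have h_sum : ∑ t ∈ range T, X t ω < (∑ t ∈ range T, μ[X t | ℱ t] ω) / 2 - a * M := h_lt
    linarith
  rw [Real.exp_neg, le_mul_inv_iff₀' (Real.exp_pos a)]
  exact (mul_le_mul_of_nonneg_left h_sub (Real.exp_nonneg a)).trans
    (h_markov.trans (integral_halfCompensatedExp_le hY hY01 T))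

end LowerTail

section Allocation

lemma measurable_apply_of_countable {Ω ι β : Type*} {_ : MeasurableSpace Ω} [MeasurableSpace ι]
    [MeasurableSpace β] [Countable ι] [MeasurableSingletonClass ι] {f : Ω → ι → β} {J : Ω → ι}
    (hf : ∀ i, Measurable fun ω => f ω i) (hJ : Measurable J) : Measurable fun ω => f ω (J ω) :=
  (measurable_from_prod_countable_left (f := fun x : Ω × ι => f x.1 x.2) hf).comp
    (measurable_id.prodMk hJ)

/-- Adaptive allocation: at round `t` the position `J t` is revealed at time `t + 1` and has
conditional law `Q t` given `ℱ t`. The rounds start at `0`, so `ℱ t` is the information available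
before ball `t` is placed. -/
structure IsAdaptiveAllocation {Ω ι : Type*} [DecidableEq ι] [MeasurableSpace ι]
    {mΩ : MeasurableSpace Ω} (μ : Measure Ω) (ℱ : Filtration ℕ mΩ) (Q : ℕ → Ω → ι → ℝ)
    (J : ℕ → Ω → ι) : Prop where
  measurable_position : ∀ t, Measurable[ℱ (t + 1)] (J t)
  condExp_position : ∀ t i, μ[(fun ω => if J t ω = i then (1 : ℝ) else 0) | ℱ t]
    =ᵐ[μ] fun ω => Q t ω i

namespace IsAdaptiveAllocation

variable {Ω : Type*} {mΩ : MeasurableSpace Ω} {μ : Measure Ω} {ℱ : Filtration ℕ mΩ}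

section Bins

variable {ι : Type*} [Fintype ι] [DecidableEq ι] [MeasurableSpace ι]
  [MeasurableSingletonClass ι] [IsFiniteMeasure μ] {Q : ℕ → Ω → ι → ℝ} {J : ℕ → Ω → ι}

lemma condExp_eval (h : IsAdaptiveAllocation μ ℱ Q J) {t : ℕ} {f : Ω → ι → ℝ}
    (hf : ∀ i, Measurable[ℱ t] fun ω => f ω i) {M : ℝ} (hfM : ∀ ω i, |f ω i| ≤ M) :
    μ[fun ω => f ω (J t ω) | ℱ t] =ᵐ[μ] fun ω => Q t ω ⬝ᵥ f ω := by
  set ind : ι → Ω → ℝ := fun i ω => if J t ω = i then 1 else 0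
  have h_ind_int (i : ι) : Integrable (ind i) μ := by
    refine .of_mem_Icc 0 1 (Measurable.ite ?_ measurable_const measurable_const).aemeasurable ?_
    · exact ℱ.le (t + 1) _ (h.measurable_position t (measurableSet_singleton i))
    · exact ae_of_all _ fun ω => by simp only [ind]; split_ifs <;> simp
  have h_int (i : ι) : Integrable ((fun ω => f ω i) * ind i) μ :=
    (h_ind_int i).bdd_mul ((hf i).mono (ℱ.le _) le_rfl).aestronglyMeasurable
      (ae_of_all _ fun ω => hfM ω i)
  have h_pull : ∀ᵐ ω ∂μ, ∀ i, μ[(fun ω => f ω i) * ind i | ℱ t] ω = f ω i * Q t ω i := by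
    refine ae_all_iff.2 fun i => ?_
    filter_upwards [condExp_mul_of_stronglyMeasurable_left (hf i).stronglyMeasurable (h_int i)
      (h_ind_int i), h.condExp_position t i] with ω h_mul h_law
    rw [h_mul, Pi.mul_apply, h_law]
  have h_sum : (fun ω => f ω (J t ω)) = ∑ i, (fun ω => f ω i) * ind i := by
    ext ω
    simp [ind]
  rw [h_sum]
  filter_upwards [condExp_finsetSum (s := univ) (fun i _ => h_int i) (ℱ t), h_pull]
    with ω h_eq h_pull_ω
  simp only [h_eq, Finset.sum_apply, h_pull_ω, dotProduct, mul_comm]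

lemma measureReal_sum_lt_half_sum_dotProduct_sub_le (h : IsAdaptiveAllocation μ ℱ Q J)
    {f : ℕ → Ω → ι → ℝ} (hf : ∀ t i, Measurable[ℱ t] fun ω => f t ω i) {M : ℝ} (hM : 0 < M)
    (hfM : ∀ t ω i, f t ω i ∈ Set.Icc 0 M) (T : ℕ) (a : ℝ) :
    μ.real {ω | ∑ t ∈ range T, f t ω (J t ω) <
      (∑ t ∈ range T, Q t ω ⬝ᵥ f t ω) / 2 - a * M} ≤ μ.real Set.univ * Real.exp (-a) := by
  have h_condExp : ∀ᵐ ω ∂μ, ∀ t, μ[fun ω => f t ω (J t ω) | ℱ t] ω = Q t ω ⬝ᵥ f t ω :=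
    ae_all_iff.2 fun t => h.condExp_eval (hf t) fun ω i =>
      (abs_of_nonneg (hfM t ω i).1).trans_le (hfM t ω i).2
  have h_meas (t : ℕ) : Measurable[ℱ (t + 1)] fun ω => f t ω (J t ω) :=
    measurable_apply_of_countable (fun i => (hf t i).mono (ℱ.mono t.le_succ) le_rfl)
      (h.measurable_position t)
  refine le_trans (ENNReal.toReal_mono (measure_ne_top _ _) (measure_mono_ae ?_))
    (measureReal_sum_lt_half_sum_condExp_sub_le h_meas hM
      (fun t => ae_of_all _ fun ω => hfM t ω _) T a)
  filter_upwards [h_condExp] with ω hω h_lt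
  change _ < _
  simpa only [hω] using! h_lt

lemma measureReal_exists_sum_lt_le (h : IsAdaptiveAllocation μ ℱ Q J) {pool : Finset (ι → ℝ)}
    {κ : ℝ} (hκ : 0 < κ) (hpool : ∀ ν ∈ pool, ∀ i, ν i ∈ Set.Icc 0 κ) (T : ℕ) (a : ℝ) :
    μ.real {ω | ∃ ν ∈ pool, ∃ t < T,
      ∑ s ∈ range t, ν (J s ω) < (∑ s ∈ range t, Q s ω ⬝ᵥ ν) / 2 - a * κ} ≤
      pool.card * (T * (μ.real Set.univ * Real.exp (-a))) := by
  have h_union : {ω | ∃ ν ∈ pool, ∃ t < T,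
      ∑ s ∈ range t, ν (J s ω) < (∑ s ∈ range t, Q s ω ⬝ᵥ ν) / 2 - a * κ} =
      ⋃ ν ∈ pool, ⋃ t ∈ range T,
        {ω | ∑ s ∈ range t, ν (J s ω) < (∑ s ∈ range t, Q s ω ⬝ᵥ ν) / 2 - a * κ} := by
    ext ω
    simp only [Set.mem_ofPred_eq, Set.mem_iUnion, mem_range, exists_prop]
  have h_bad : ∀ ν ∈ pool, ∀ t ∈ range T, μ.real {ω | ∑ s ∈ range t, ν (J s ω) <
      (∑ s ∈ range t, Q s ω ⬝ᵥ ν) / 2 - a * κ} ≤ μ.real Set.univ * Real.exp (-a) :=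
    fun ν hν t _ => h.measureReal_sum_lt_half_sum_dotProduct_sub_le
      (f := fun _ _ => ν) (fun _ _ => measurable_const) hκ (fun _ _ => hpool ν hν) t a
  rw [h_union]
  refine (measureReal_biUnion_finset_le _ _).trans ((sum_le_sum fun ν hν =>
    (measureReal_biUnion_finset_le _ _).trans (sum_le_sum (h_bad ν hν))).trans_eq ?_)
  simp only [sum_const, card_range, nsmul_eq_mul]

end Bins

variable {n : ℕ} {Q : ℕ → Ω → Fin n → ℝ} {J : ℕ → Ω → Fin n}

lemma measurable_binLoad (h : IsAdaptiveAllocation μ ℱ Q J) (t : ℕ) (i : Fin n) :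
    Measurable[ℱ t] fun ω => (binLoad J t i ω : ℝ) := by
  simp only [binLoad, card_filter, Nat.cast_sum, Nat.cast_ite]
  exact Finset.measurable_sum _ fun s hs => .ite
    (ℱ.mono (mem_range.1 hs) _ (h.measurable_position s (measurableSet_singleton i)))
    measurable_const measurable_const

lemma measureReal_binLoad_le_and_collisions_lt_le [IsFiniteMeasure μ]
    (h : IsAdaptiveAllocation μ ℱ Q J) {L : ℝ} (hL : 0 < L) (T : ℕ) (b : ℝ) :
    μ.real {ω | (∀ i, binLoad J T i ω ≤ L) ∧ collisions J T ω <
      (∑ t ∈ range T, Q t ω ⬝ᵥ fun i => (binLoad J t i ω : ℝ)) / 2 - b * L} ≤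
      μ.real Set.univ * Real.exp (-b) := by
  -- The loads are truncated at `L` to bound the process; on the event this changes nothing.
  refine (measureReal_mono fun ω hω => ?_).trans
    (h.measureReal_sum_lt_half_sum_dotProduct_sub_le
      (f := fun t ω i => min (binLoad J t i ω : ℝ) L)
      (fun t i => (h.measurable_binLoad t i).min measurable_const) hL
      (fun t ω i => ⟨le_min (Nat.cast_nonneg _) hL.le, min_le_right _ _⟩) T b)
  obtain ⟨h_load, h_lt⟩ := hω
  have h_min : ∀ t ∈ range T, ∀ i, min (binLoad J t i ω : ℝ) L = binLoad J t i ω := fun t ht i =>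
    min_eq_left <| le_trans
      (Nat.cast_le.2 (binLoad_mono J ω i (mem_range.1 ht).le)) (h_load i)
  rw [collisions_eq_sum_binLoad, Nat.cast_sum] at h_lt
  rw [Set.mem_ofPred_eq, sum_congr rfl fun t ht => h_min t ht _,
    sum_congr rfl fun t ht => congrArg (Q t ω ⬝ᵥ ·) (funext (h_min t ht))]
  exact h_lt

theorem measureReal_binLoad_le_and_collisions_lt_pool_le [IsProbabilityMeasure μ]
    (h : IsAdaptiveAllocation μ ℱ Q J) {pool : Finset (Fin n → ℝ)} {κ : ℝ}
    (hpool : ∀ ν ∈ pool, ν ∈ stdSimplex ℝ (Fin n)) (hκ : ∀ ν ∈ pool, ∀ i, ν i ≤ κ)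
    (hQ : ∀ t ω, Q t ω ∈ pool) {L : ℝ} (hL : 0 < L) (T : ℕ) (a b : ℝ) :
    μ.real {ω | (∀ i, binLoad J T i ω ≤ L) ∧ collisions J T ω <
      ((T : ℝ) ^ 2 / n - T * κ) / 8 - T * (a * κ) / 2 - b * L} ≤
      pool.card * (T * Real.exp (-a)) + Real.exp (-b) := by
  obtain ⟨ω₀⟩ := μ.nonempty_of_neZero
  have hκ_pos : 0 < κ := pos_of_mem_stdSimplex_of_le (hpool _ (hQ 0 ω₀)) (hκ _ (hQ 0 ω₀))
  have h_strategy := h.measureReal_exists_sum_lt_le hκ_pos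
    (fun ν hν i => ⟨(hpool ν hν).1 i, hκ ν hν i⟩) T a
  have h_collisions := h.measureReal_binLoad_le_and_collisions_lt_le hL T b
  rw [probReal_univ, one_mul] at h_strategy h_collisions
  refine (measureReal_mono ?_).trans
    ((measureReal_union_le _ _).trans (add_le_add h_strategy h_collisions))
  rintro ω ⟨h_load, h_lt⟩
  by_contra h_good
  simp only [Set.mem_union, Set.mem_ofPred_eq, not_or, not_exists, not_and, not_lt] at h_good
  obtain ⟨h_strategy_ω, h_collisions_ω⟩ := h_good
  exact h_lt.not_ge (le_collisions_of_le_sum (fun t => hpool _ (hQ t ω)) (fun t => hκ _ (hQ t ω))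
    (fun t ht => h_strategy_ω _ (hQ t ω) t ht) (h_collisions_ω h_load))

end IsAdaptiveAllocation

end Allocation

section Asymptotics

open Filter

lemma eventually_const_add_mul_log_mul_one_add_sqrt_le (C : ℝ) {p c ε : ℝ} (hp : 0 ≤ p)
    (hc : 0 ≤ c) (hε : 0 < ε) :
    ∀ᶠ n : ℕ in atTop, C + p * Real.log n * (1 + c * √n) ≤ ε * n := by
  have h_log : ∀ᶠ n : ℕ in atTop, ‖Real.log n‖ ≤ ε / (2 * (p * (1 + c) + 1)) *
      ‖(n : ℝ) ^ (1 / 2 : ℝ)‖ :=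
    tendsto_natCast_atTop_atTop.eventually
      ((isLittleO_log_rpow_atTop (by norm_num)).bound (by positivity))
  filter_upwards [h_log, eventually_ge_atTop 1,
    tendsto_natCast_atTop_atTop.eventually_ge_atTop (2 * C / ε)] with n h_log h_one h_large
  have h_one : (1 : ℝ) ≤ n := by exact_mod_cast h_one
  have h_sqrt_one : 1 ≤ √(n : ℝ) := Real.one_le_sqrt.2 h_one
  rw [← Real.sqrt_eq_rpow, Real.norm_of_nonneg (Real.log_nonneg h_one),
    Real.norm_of_nonneg (Real.sqrt_nonneg _)] at h_log
  rw [div_le_iff₀ hε] at h_large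
  have h_main : p * Real.log n * (1 + c * √n) ≤ ε / 2 * n :=
    calc p * Real.log n * (1 + c * √n)
        ≤ p * (ε / (2 * (p * (1 + c) + 1)) * √n) * ((1 + c) * √n) := by
          gcongr
          linarith
      _ = ε / 2 * (p * (1 + c) / (p * (1 + c) + 1)) * √n ^ 2 := by
          field_simp
      _ ≤ ε / 2 * 1 * √n ^ 2 := by
          gcongr
          exact div_le_one_of_le₀ (by linarith) (by positivity)
      _ = ε / 2 * n := by rw [mul_one, Real.sq_sqrt (Nat.cast_nonneg n)]
  linarith

lemma sq_mul_sub_le_sq_floor_div {c x : ℝ} (hc : 0 ≤ c) (hx : 0 ≤ x) :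
    c ^ 2 * x - 2 * c ≤ (⌊c * x⌋₊ : ℝ) ^ 2 / x := by
  rcases hx.eq_or_lt with rfl | hx
  · simpa using hc
  rw [le_div_iff₀ hx]
  nlinarith [Nat.floor_le (mul_nonneg hc hx.le), Nat.lt_floor_add_one (c * x),
    sq_nonneg ((⌊c * x⌋₊ : ℝ) - c * x), mul_nonneg hc hx.le]

lemma eventually_sq_mul_div_le {c p : ℝ} (hc : 0 < c) (hp : 0 ≤ p) :
    ∀ᶠ n : ℕ in atTop, ∀ κ m : ℝ, 0 ≤ κ → 1 ≤ m → κ * m ≤ c / (16 * (p + 3)) →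
      c ^ 2 * n / 16 ≤ ((⌊c * n⌋₊ : ℝ) ^ 2 / n - ⌊c * n⌋₊ * κ) / 8 -
        ⌊c * n⌋₊ * ((p + 2) * m * κ) / 2 - p * Real.log n * (1 + c * √n) := by
  filter_upwards [eventually_const_add_mul_log_mul_one_add_sqrt_le (c / 4) hp hc.le
    (by positivity : 0 < c ^ 2 / 32)] with n h_log κ m hκ hm hκm
  have h_floor : (⌊c * n⌋₊ : ℝ) ≤ c * n := Nat.floor_le (by positivity)
  have h_sq := sq_mul_sub_le_sq_floor_div hc.le n.cast_nonneg
  have h_mass : ⌊c * n⌋₊ * κ / 8 + ⌊c * n⌋₊ * ((p + 2) * m * κ) / 2 ≤ c ^ 2 * n / 32 :=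
    calc ⌊c * n⌋₊ * κ / 8 + ⌊c * n⌋₊ * ((p + 2) * m * κ) / 2
        ≤ ⌊c * n⌋₊ * ((p + 3) * (κ * m) / 2) := by
          have h_κ : κ ≤ κ * m := le_mul_of_one_le_right hκ hm
          rw [mul_div_assoc, mul_div_assoc, ← mul_add]
          gcongr
          linarith
      _ ≤ c * n * ((p + 3) * (c / (16 * (p + 3))) / 2) := by gcongr
      _ = c ^ 2 * n / 32 := by
          field_simp
          ring
  linarith

lemma exp_neg_mul_log (p : ℕ) {x : ℝ} (hx : 0 < x) : Real.exp (-(p * Real.log x)) = 1 / x ^ p := by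
  rw [← Real.log_pow, Real.exp_neg, Real.exp_log (pow_pos hx p), one_div]

lemma card_mul_mul_exp_neg_le {N T m p : ℕ} {c x : ℝ} (hx : 0 < x) (hm : Real.log x ≤ m)
    (hN : N ≤ 2 ^ m) (hT : T ≤ c * x) :
    N * (T * Real.exp (-((p + 2) * m))) ≤ c / x ^ p := by
  have h_exp : x ≤ Real.exp m := (Real.log_le_iff_le_exp hx).1 hm
  have h_card : (N : ℝ) ≤ Real.exp m :=
    calc (N : ℝ) ≤ 2 ^ m := by exact_mod_cast hN
      _ ≤ Real.exp 1 ^ m := by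
          gcongr
          linarith [Real.add_one_le_exp 1]
      _ = Real.exp m := Real.exp_one_pow m
  have hc : 0 ≤ c := nonneg_of_mul_nonneg_left ((Nat.cast_nonneg T).trans hT) hx
  rw [le_div_iff₀ (pow_pos hx p)]
  calc N * (T * Real.exp (-((p + 2) * m))) * x ^ p
      ≤ Real.exp m * (c * Real.exp m * Real.exp (-((p + 2) * m))) * Real.exp m ^ p := by
        gcongr
        exact hT.trans (mul_le_mul_of_nonneg_left h_exp hc)
    _ = c * Real.exp (m + m + -((p + 2) * m) + p * m) := by
        rw [Real.exp_add, Real.exp_add, Real.exp_add, Real.exp_nat_mul]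
        ring
    _ = c := by
        ring_nf
        simp

end Asymptotics

lemma one_sub_measureReal_compl_le {Ω : Type*} {mΩ : MeasurableSpace Ω} {μ : Measure Ω}
    [IsProbabilityMeasure μ] (s : Set Ω) : 1 - μ.real sᶜ ≤ μ.real s := by
  rw [sub_le_iff_le_add, ← probReal_univ (μ := μ), ← Set.union_compl_self s]
  exact measureReal_union_le s sᶜ

theorem matching_lower_bound_collisions_general {c : ℝ} (hc : 0 < c) (p : ℕ) :
    ∀ᶠ n : ℕ in Filter.atTop,
    ∀ k m : ℕ, Real.log n ≤ m → (k : ℝ) * m ≤ c / (16 * (p + 3)) * n →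
    ∀ (Ω : Type*) (mΩ : MeasurableSpace Ω) (μ : Measure Ω), IsProbabilityMeasure μ →
    ∀ (ℱ : Filtration ℕ mΩ) (pool : Finset (Fin n → ℝ)), pool.card ≤ 2 ^ m →
      (∀ ν ∈ pool, ν ∈ stdSimplex ℝ (Fin n)) →
      (∀ ν ∈ pool, ∀ i, ν i ≤ (k : ℝ) / n) →
    ∀ (Q : ℕ → Ω → Fin n → ℝ) (J : ℕ → Ω → Fin n),
      (∀ t ω, Q t ω ∈ pool) →
      IsAdaptiveAllocation μ ℱ Q J →
      1 - (c + 1) / (n : ℝ) ^ p ≤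
        μ.real {ω | c ^ 2 * n / 16 ≤ (collisions J ⌊c * n⌋₊ ω : ℝ)} := by
  filter_upwards [eventually_sq_mul_div_le hc p.cast_nonneg, Filter.eventually_ge_atTop 2]
    with n h_threshold hn k m hm hkm Ω _ μ _ ℱ pool hcard hpool hk Q J hQ h
  have hn_one : (1 : ℝ) < n := by exact_mod_cast hn
  have hn_pos : (0 : ℝ) < n := one_pos.trans hn_one
  have hm_one : (1 : ℝ) ≤ m := by exact_mod_cast (Real.log_pos hn_one).trans_le hm
  have h_threshold := h_threshold (k / n) m (by positivity) hm_one
    (by rwa [div_mul_eq_mul_div, div_le_iff₀ hn_pos])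
  have h_tail := h.measureReal_binLoad_le_and_collisions_lt_pool_le hpool hk hQ
    (by positivity : 0 < 1 + c * √n) ⌊c * n⌋₊ ((p + 2) * m) (p * Real.log n)
  rw [exp_neg_mul_log p hn_pos] at h_tail
  refine (sub_le_sub_left ?_ 1).trans (one_sub_measureReal_compl_le _)
  rw [add_div]
  refine (measureReal_mono fun ω hω => ?_).trans (h_tail.trans (add_le_add_left
    (card_mul_mul_exp_neg_le hn_pos hm hcard (Nat.floor_le (by positivity))) _))
  have h_lt : (collisions J ⌊c * n⌋₊ ω : ℝ) < c ^ 2 * n / 16 := not_le.1 hω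
  have h_sqrt : √(2 * collisions J ⌊c * n⌋₊ ω) ≤ c * √n := by
    rw [Real.sqrt_le_left (by positivity), mul_pow, Real.sq_sqrt hn_pos.le]
    linarith [mul_pos (pow_pos hc 2) hn_pos]
  exact ⟨fun i => (binLoad_le_one_add_sqrt_collisions J _ ω i).trans (by gcongr),
    h_lt.trans_le h_threshold⟩

/-- The collision lower bound of Theorem 3 of the paper: fix `δ ∈ (0,1)`. There are
constants `ε, A > 0` such that for all sufficiently large `n`, in the relaxed adaptive
allocation model allocating `⌊(1-δ)n⌋` balls into `n` bins with pool of at most `2^m`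
strategies (each with point masses at most `k/n`), `m ≥ log n` and `k m ≤ ε n`, with
probability at least `1 - A n⁻⁴` the number of collisions is at least `(1-δ)² n / 16`. -/
theorem matching_lower_bound_collisions (δ : ℝ) (hδ0 : 0 < δ) (hδ1 : δ < 1) :
    ∃ ε : ℝ, 0 < ε ∧ ∃ A : ℝ, 0 < A ∧ ∃ n₀ : ℕ, ∀ n : ℕ, n₀ ≤ n →
    ∀ k m : ℕ, Real.log n ≤ m → (k : ℝ) * m ≤ ε * n →
    ∀ (Ω : Type) (_ : MeasurableSpace Ω) (μ : Measure Ω), IsProbabilityMeasure μ →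
    ∀ (ℱ : Filtration ℕ ‹MeasurableSpace Ω›)
      (pool : Finset (Fin n → ℝ)), pool.card ≤ 2 ^ m →
      (∀ ν ∈ pool, ∀ i, 0 ≤ ν i) →
      (∀ ν ∈ pool, ∑ i, ν i = 1) →
      (∀ ν ∈ pool, ∀ i, ν i ≤ (k : ℝ) / n) →
    ∀ (Q : ℕ → Ω → Fin n → ℝ) (J : ℕ → Ω → Fin n),
      (∀ t ω, Q t ω ∈ pool) →
      (∀ t i, Measurable[ℱ t] fun ω => Q t ω i) →
      (∀ t, Measurable[ℱ (t + 1)] (J t)) →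
      (∀ t i, (μ[(fun ω => if J t ω = i then (1 : ℝ) else 0) | ℱ t])
          =ᵐ[μ] fun ω => Q t ω i) →
      1 - A / (n : ℝ) ^ 4
        ≤ (μ {ω | (1 - δ) ^ 2 * n / 16
            ≤ (collisions J (Nat.floor ((1 - δ) * n)) ω : ℝ)}).toReal := by
  have h_pos : 0 < 1 - δ := sub_pos.2 hδ1
  obtain ⟨n₀, h_bound⟩ :=
    Filter.eventually_atTop.1 (matching_lower_bound_collisions_general h_pos 4)
  refine ⟨(1 - δ) / (16 * ((4 : ℕ) + 3)), by positivity, 1 - δ + 1, by positivity, n₀, ?_⟩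
  intro n hn k m hm hkm Ω _ μ hμ ℱ pool hcard h_nonneg h_mass hk Q J hQ _ hJ hQJ
  exact h_bound n hn k m hm hkm Ω _ μ hμ ℱ pool hcard
    (fun ν hν => ⟨h_nonneg ν hν, h_mass ν hν⟩) hk Q J hQ ⟨hJ, hQJ⟩
end

section
/- Fix δ ∈ (0,1). There exists a constant C = C(δ) > 0 such that the following holds with probability tending to 1 as n → ∞: if k ≥ (3/δ)·log n, m ≥ log n · log₂ log n, and k·m ≥ C·n, then there exist a state space S of size at most 2^m with an initial state s_0 ∈ S, a transition function σ : S × {1,…,n}^k → S, and a choice function a : S × {1,…,n}^k → {1,…,k}, such that when U_1, …, U_{⌊(1−δ)n⌋} are independent random vectors each consisting of k i.i.d. uniform bin indices, the states are defined by s_t = σ(s_{t−1}, U_t), and ball t is placed in bin U_t[a(s_{t−1}, U_t)], all ⌊(1−δ)n⌋ balls land in distinct bins (a perfect allocation with no collisions). -/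
open MeasureTheory Finset

/-- The state of a memory-bounded allocation algorithm after `t` rounds: the state space
is `S`, the initial state is `s0`, the transition function is `σ`, and in round `t` the
algorithm observes the vector `ω t` of `k` offered bins. -/
def memState {S : Type*} {n k b : ℕ} (σ : S → (Fin k → Fin n) → S) (s0 : S)
    (ω : Fin b → Fin k → Fin n) : ℕ → S
  | 0 => s0
  | t + 1 => if h : t < b then σ (memState σ s0 ω t) (ω ⟨t, h⟩) else memState σ s0 ω t

/-- The bin in which ball `t` is placed: the algorithm, in state `memState σ s0 ω t`,
uses the choice function `a` to pick one of the `k` offered bins `ω t`. -/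
def memPlace {S : Type*} {n k b : ℕ} (σ : S → (Fin k → Fin n) → S)
    (a : S → (Fin k → Fin n) → Fin k) (s0 : S)
    (ω : Fin b → Fin k → Fin n) (t : Fin b) : Fin n :=
  ω t (a (memState σ s0 ω t) (ω t))

/-- The uniform probability measure on `Fin n` (for `n ≥ 1`). -/
noncomputable def uniformFin (n : ℕ) : Measure (Fin n) :=
  ((n : ENNReal))⁻¹ • Measure.count

/-!
Each ball goes to the smallest free bin on offer, and every `q`-th round the smallest free bin is
given up as wasted. A round skips few free bins, typically about `n / k`, because skipping `g` of
them means that `k` independent offers avoid `g` given bins. An exponential moment bound therefore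
keeps the total overhang of the occupied set beyond its own cardinality below `h ^ 2`, where the
width `h` is of order `n / k + log n`. Such a set has at most `2 * h` holes below its cardinality,
and the sweeps of the last `2 * h * q` rounds have filled all holes that existed before them: the
occupied set is an initial segment, an arbitrary trace on a window of length `O(h)`, and a few
overhanging bins whose overhangs have sum at most `h ^ 2`. There are `exp (O(h))` such sets, which
is the memory used. Finally, at most `(1 - δ + 1 / q) * n` bins are ever occupied or wasted, so
`k` offers all fail to be free with probability at most `(1 - δ + 1 / q) ^ k`, which is `o(1 / n)`.
-/

namespace OnlineAllocation

section ProductMeasure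

theorem measurePreserving_update {ι : Type*} [Fintype ι] [DecidableEq ι] {X : ι → Type*}
    [∀ i, MeasurableSpace (X i)] (μ : ∀ i, Measure (X i)) [∀ i, SigmaFinite (μ i)] (i : ι)
    [IsProbabilityMeasure (μ i)] :
    MeasurePreserving (fun p : (∀ j, X j) × X i => Function.update p.1 i p.2)
      ((Measure.pi μ).prod (μ i)) (Measure.pi μ) := by
  refine ⟨measurable_update', (Measure.pi_eq fun s hs => ?_).symm⟩
  have hpre : (fun p : (∀ j, X j) × X i => Function.update p.1 i p.2) ⁻¹' Set.univ.pi s =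
      Set.univ.pi (Function.update s i Set.univ) ×ˢ s i := by
    ext ⟨ω, u⟩
    simp only [Set.mem_preimage, Set.mem_prod, Set.mem_univ_pi]
    constructor
    · refine fun h => ⟨fun j => ?_, by simpa using h i⟩
      rcases eq_or_ne j i with rfl | hj
      · simp
      · simpa [hj] using h j
    · rintro ⟨h, hu⟩ j
      rcases eq_or_ne j i with rfl | hj
      · simpa using hu
      · simpa [hj] using h j
  rw [Measure.map_apply measurable_update' (.univ_pi hs), hpre, Measure.prod_prod, Measure.pi_pi,
    ← prod_erase_mul _ _ (mem_univ i), ← prod_erase_mul univ (fun j => μ j (s j)) (mem_univ i),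
    Function.update_self, measure_univ, mul_one]
  congr 1
  exact prod_congr rfl fun j hj => by rw [Function.update_of_ne (ne_of_mem_erase hj)]

variable {Ω : Type*} [MeasurableSpace Ω] {μ : Measure Ω} [IsProbabilityMeasure μ] {b : ℕ}

theorem integral_pi_eq_integral_update {ι : Type*} [Fintype ι] [DecidableEq ι] (i : ι)
    {F : (ι → Ω) → ℝ} (hF : Integrable F (Measure.pi fun _ => μ)) :
    ∫ ω, F ω ∂Measure.pi (fun _ => μ) =
      ∫ ω, ∫ u, F (Function.update ω i u) ∂μ ∂Measure.pi fun _ => μ := by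
  have hmp := measurePreserving_update (fun _ : ι => μ) i
  have hmeas := hF.aestronglyMeasurable
  rw [← hmp.map_eq] at hmeas
  have hmap := integral_map hmp.aemeasurable hmeas
  rw [hmp.map_eq] at hmap
  exact hmap.trans (integral_prod _ (hmp.integrable_comp_of_integrable hF))

theorem measureReal_pi_le_of_forall_update_le {ι : Type*} [Fintype ι] [DecidableEq ι] (i : ι)
    {A : Set (ι → Ω)} (hA : MeasurableSet A) {c : ℝ}
    (hc : ∀ ω, μ.real {u | Function.update ω i u ∈ A} ≤ c) :
    (Measure.pi fun _ => μ).real A ≤ c := by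
  have hsection (ω : ι → Ω) :
      ∫ u, A.indicator (1 : (ι → Ω) → ℝ) (Function.update ω i u) ∂μ ≤ c := by
    have hpre : ∫ u, (Function.update ω i ⁻¹' A).indicator (1 : Ω → ℝ) u ∂μ ≤ c := by
      rw [integral_indicator_one (measurable_update ω hA)]
      exact hc ω
    exact hpre
  rw [← integral_indicator_one hA, integral_pi_eq_integral_update (F := A.indicator 1) i
    ((integrable_const (1 : ℝ)).indicator hA)]
  refine (integral_mono_of_nonneg ?_ (integrable_const c) (.of_forall hsection)).trans_eq (by simp)
  exact .of_forall fun ω => integral_nonneg fun u => Set.indicator_nonneg (fun _ _ => by simp) _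

theorem integral_prod_range_le_prod {X : ℕ → (Fin b → Ω) → ℝ} {c : ℕ → ℝ} {t : ℕ} (ht : t ≤ b)
    (hX : ∀ s ω, 0 ≤ X s ω)
    (hint : ∀ s ≤ t, Integrable (fun ω => ∏ r ∈ range s, X r ω) (Measure.pi fun _ => μ))
    (hadapted : ∀ (i : Fin b) (s : ℕ), s < i → ∀ ω u, X s (Function.update ω i u) = X s ω)
    (hc : ∀ (i : Fin b) ω, ∫ u, X i (Function.update ω i u) ∂μ ≤ c i) :
    ∫ ω, ∏ s ∈ range t, X s ω ∂Measure.pi (fun _ => μ) ≤ ∏ s ∈ range t, c s := by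
  induction t with
  | zero => simp
  | succ t ih =>
    let i : Fin b := ⟨t, ht⟩
    have hfactor (ω : Fin b → Ω) :
        ∫ u, ∏ s ∈ range (t + 1), X s (Function.update ω i u) ∂μ =
          (∏ s ∈ range t, X s ω) * ∫ u, X t (Function.update ω i u) ∂μ := by
      rw [← integral_const_mul]
      refine integral_congr_ae (.of_forall fun u => ?_)
      simp only [prod_range_succ]
      congr 1
      exact prod_congr rfl fun s hs => hadapted i s (mem_range.1 hs) ω u
    have hc_nonneg : 0 ≤ c t := by
      obtain ⟨ω⟩ : Nonempty (Fin b → Ω) := ⟨fun _ => μ.nonempty_of_neZero.some⟩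
      exact (integral_nonneg fun u => hX _ _).trans (hc i ω)
    calc ∫ ω, ∏ s ∈ range (t + 1), X s ω ∂Measure.pi (fun _ => μ)
        = ∫ ω, (∏ s ∈ range t, X s ω) * ∫ u, X t (Function.update ω i u) ∂μ
            ∂Measure.pi fun _ => μ := by
          rw [integral_pi_eq_integral_update i (hint _ le_rfl)]
          simp only [hfactor]
      _ ≤ ∫ ω, (∏ s ∈ range t, X s ω) * c t ∂Measure.pi fun _ => μ := by
          refine integral_mono_of_nonneg (.of_forall fun ω => ?_)
            ((hint t t.le_succ).mul_const _) (.of_forall fun ω => ?_)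
          · exact mul_nonneg (prod_nonneg fun s _ => hX s ω) (integral_nonneg fun u => hX _ _)
          · exact mul_le_mul_of_nonneg_left (hc i ω) (prod_nonneg fun s _ => hX s ω)
      _ ≤ ∏ s ∈ range (t + 1), c s := by
          rw [integral_mul_const, prod_range_succ]
          gcongr
          exact ih (by omega) fun s hs => hint s (by omega)

end ProductMeasure

section ExponentialMoments

theorem inv_one_sub_exp_neg_le {θ : ℝ} (hθ : 0 < θ) :
    (1 - Real.exp (-θ))⁻¹ ≤ 1 + 1 / θ := by
  have hexp : Real.exp (-θ) ≤ 1 / (1 + θ) := by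
    rw [Real.exp_neg, ← one_div]
    exact one_div_le_one_div_of_le (by positivity) (by linarith [Real.add_one_le_exp θ])
  have hsub : (1 + 1 / θ)⁻¹ = 1 - 1 / (1 + θ) := by
    field_simp
    ring
  rw [inv_le_comm₀ (by linarith [Real.exp_lt_one_iff.2 (neg_lt_zero.2 hθ)]) (by positivity), hsub]
  linarith

theorem prod_one_add_exp_neg_mul_le {θ : ℝ} (hθ : 0 < θ) (s : Finset ℕ) :
    ∏ a ∈ s, (1 + Real.exp (-(θ * a))) ≤ Real.exp (1 + 1 / θ) := by
  have hpow (a : ℕ) : Real.exp (-(θ * a)) = Real.exp (-θ) ^ a := by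
    rw [← Real.exp_nat_mul]
    ring_nf
  have hlt : Real.exp (-θ) < 1 := Real.exp_lt_one_iff.2 (neg_lt_zero.2 hθ)
  calc ∏ a ∈ s, (1 + Real.exp (-(θ * a)))
      ≤ ∏ a ∈ s, Real.exp (Real.exp (-(θ * a))) := by
        gcongr with a
        rw [add_comm]
        exact Real.add_one_le_exp _
    _ = Real.exp (∑ a ∈ s, Real.exp (-θ) ^ a) := by simp only [Real.exp_sum, hpow]
    _ ≤ Real.exp (∑' a, Real.exp (-θ) ^ a) := by
        gcongr
        exact (summable_geometric_of_lt_one (Real.exp_pos _).le hlt).sum_le_tsum s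
          fun a _ => by positivity
    _ ≤ Real.exp (1 + 1 / θ) := by
        rw [tsum_geometric_of_lt_one (Real.exp_pos _).le hlt]
        exact Real.exp_le_exp.2 (inv_one_sub_exp_neg_le hθ)

variable {Ω : Type*} [MeasurableSpace Ω] {μ : Measure Ω} [IsProbabilityMeasure μ] {G : Ω → ℕ}
  {N : ℕ}

theorem integral_comp_nat_eq_add_sum (hG : Measurable G) (hN : ∀ ω, G ω ≤ N) (f : ℕ → ℝ) :
    ∫ ω, f (G ω) ∂μ = f 0 + ∑ g ∈ range N, (f (g + 1) - f g) * μ.real {ω | g + 1 ≤ G ω} := by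
  have hmeas (g : ℕ) : MeasurableSet {ω | g + 1 ≤ G ω} := measurableSet_le measurable_const hG
  have hpoint (ω : Ω) : f (G ω) =
      f 0 + ∑ g ∈ range N, {ω | g + 1 ≤ G ω}.indicator (fun _ => f (g + 1) - f g) ω := by
    simp only [Set.indicator_apply, Set.mem_ofPred_eq, ← sum_filter]
    have hfilter : {g ∈ range N | g + 1 ≤ G ω} = range (G ω) := by
      ext g
      have := hN ω
      simp only [mem_filter, mem_range]
      omega
    rw [hfilter, sum_range_sub]
    ring
  have hint (g : ℕ) : Integrable
      ({ω | g + 1 ≤ G ω}.indicator fun _ => f (g + 1) - f g) μ :=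
    (integrable_const _).indicator (hmeas g)
  simp only [hpoint]
  rw [integral_add (integrable_const _) (integrable_finsetSum _ fun g _ => hint g),
    integral_finsetSum _ fun g _ => hint g, integral_const, probReal_univ, one_smul]
  simp only [integral_indicator_const _ (hmeas _), smul_eq_mul, mul_comm]

theorem integral_exp_mul_sub_le (hG : Measurable G) (hN : ∀ ω, G ω ≤ N) {θ : ℝ} (hθ : 0 ≤ θ)
    (htail : ∀ g : ℕ, μ.real {ω | g ≤ G ω} ≤ Real.exp (-(2 * θ * g))) (r : ℕ) :
    ∫ ω, Real.exp (θ * (G ω - r : ℕ)) ∂μ ≤ 1 + Real.exp (-(θ * r)) := by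
  let a (g : ℕ) : ℝ := Real.exp (-(2 * θ * r) - θ * (g + 1))
  have hterm (g : ℕ) : (Real.exp (θ * (g + 1 : ℕ)) - Real.exp (θ * g)) *
      μ.real {ω | g + 1 ≤ G ω - r} ≤ a g - a (g + 1) := by
    have hevent : {ω | g + 1 ≤ G ω - r} = {ω | r + g + 1 ≤ G ω} := by
      ext ω
      simp only [Set.mem_ofPred_eq]
      omega
    calc _ ≤ (Real.exp (θ * (g + 1 : ℕ)) - Real.exp (θ * g)) *
          Real.exp (-(2 * θ * (r + g + 1 : ℕ))) := by
          rw [hevent]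
          refine mul_le_mul_of_nonneg_left (htail _) (sub_nonneg.2 ?_)
          gcongr
          omega
      _ = a g - a (g + 1) := by
          simp only [a, sub_mul, ← Real.exp_add]
          push_cast
          ring_nf
  calc ∫ ω, Real.exp (θ * (G ω - r : ℕ)) ∂μ
      = 1 + ∑ g ∈ range N, (Real.exp (θ * (g + 1 : ℕ)) - Real.exp (θ * g)) *
          μ.real {ω | g + 1 ≤ G ω - r} := by
        simpa using integral_comp_nat_eq_add_sum (μ := μ) (hG.sub_const r)
          (fun ω => (Nat.sub_le _ _).trans (hN ω)) fun g => Real.exp (θ * g)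
    _ ≤ 1 + ∑ g ∈ range N, (a g - a (g + 1)) := by
        gcongr with g
        exact hterm g
    _ ≤ 1 + a 0 := by
        rw [sum_range_sub']
        linarith [Real.exp_pos (-(2 * θ * r) - θ * (N + 1))]
    _ ≤ 1 + Real.exp (-(θ * r)) := by
        refine add_le_add_right (Real.exp_le_exp.2 ?_) 1
        push_cast
        nlinarith [mul_nonneg hθ (Nat.cast_nonneg (α := ℝ) r)]

end ExponentialMoments

section Restriction

variable {S : Type*} {n k b : ℕ}

theorem memState_succ (σ : S → (Fin k → Fin n) → S) (s0 : S) (ω : Fin b → Fin k → Fin n)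
    (i : Fin b) :
    memState σ s0 ω (i + 1) = σ (memState σ s0 ω i) (ω i) := by
  rw [memState, dif_pos i.2]

theorem memState_congr (σ : S → (Fin k → Fin n) → S) (s0 : S) {ω ω' : Fin b → Fin k → Fin n} {t : ℕ}
    (h : ∀ j : Fin b, j < t → ω j = ω' j) : memState σ s0 ω t = memState σ s0 ω' t := by
  induction t with
  | zero => rfl
  | succ t ih =>
    rw [memState, memState, ih fun j hj => h j (hj.trans t.lt_succ_self)]
    split_ifs with ht
    · rw [h ⟨t, ht⟩ t.lt_succ_self]
    · rfl

open Classical in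
/-- The transition function `σ` confined to the finite set of states `T`: a transition that would
leave `T` is not carried out. -/
noncomputable def restrictTransition (σ : S → (Fin k → Fin n) → S) (T : Finset S) (s : T)
    (u : Fin k → Fin n) : T :=
  if h : σ s u ∈ T then ⟨σ s u, h⟩ else s

variable {σ : S → (Fin k → Fin n) → S} {T : Finset S} {s0 : T} {ω : Fin b → Fin k → Fin n} {t : ℕ}

theorem coe_memState_restrictTransition (h : ∀ r ≤ t, memState σ (s0 : S) ω r ∈ T) :
    ((memState (restrictTransition σ T) s0 ω t : T) : S) = memState σ (s0 : S) ω t := by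
  induction t with
  | zero => rfl
  | succ t ih =>
    have hmem := h (t + 1) le_rfl
    have ih := ih fun r hr => h r (hr.trans t.le_succ)
    rw [memState] at hmem ⊢
    rw [memState]
    split_ifs at hmem ⊢ with ht
    · rw [← ih] at hmem ⊢
      rw [restrictTransition, dif_pos hmem]
    · exact ih

theorem memPlace_restrictTransition (a : S → (Fin k → Fin n) → Fin k) {i : Fin b}
    (h : ∀ r ≤ (i : ℕ), memState σ (s0 : S) ω r ∈ T) :
    memPlace (restrictTransition σ T) (fun s => a s) s0 ω i = memPlace σ a (s0 : S) ω i := by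
  rw [memPlace, memPlace, coe_memState_restrictTransition h]

end Restriction

section Bins

variable {n k : ℕ}

/-- The smallest bin outside `O`. -/
noncomputable def firstFree (O : Finset ℕ) : ℕ := sInf (O : Set ℕ)ᶜ

/-- The offered bins that are not yet occupied. -/
def freeOffers (O : Finset ℕ) (u : Fin k → Fin n) : Finset ℕ :=
  univ.image (fun j => (u j : ℕ)) \ O

/-- The bin the algorithm occupies with the next ball: the smallest free offer. If there is none
the allocation has failed, and the default `firstFree O` keeps the cardinality of the occupied set
deterministic. -/
noncomputable def nextBin (O : Finset ℕ) (u : Fin k → Fin n) : ℕ :=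
  if h : (freeOffers O u).Nonempty then (freeOffers O u).min' h else firstFree O

/-- The free bins below every free offer; all free bins if there is no free offer. -/
def skipped (O : Finset ℕ) (u : Fin k → Fin n) : Finset (Fin n) :=
  {x | (x : ℕ) ∉ O ∧ ∀ j, (u j : ℕ) ∉ O → x < u j}

/-- The total overhang of `O` beyond the threshold `c`. -/
def excess (c : ℕ) (O : Finset ℕ) : ℕ := ∑ a ∈ O, (a - c)

theorem firstFree_notMem (O : Finset ℕ) : firstFree O ∉ O :=
  Nat.sInf_mem O.finite_toSet.infinite_compl.nonempty

theorem firstFree_le {O : Finset ℕ} {a : ℕ} (ha : a ∉ O) : firstFree O ≤ a :=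
  Nat.sInf_le ha

theorem range_firstFree_subset (O : Finset ℕ) : range (firstFree O) ⊆ O := fun a ha => by
  by_contra hO
  exact (mem_range.1 ha).not_ge (firstFree_le hO)

theorem firstFree_le_card (O : Finset ℕ) : firstFree O ≤ #O := by
  simpa using card_le_card (range_firstFree_subset O)

theorem mem_freeOffers {O : Finset ℕ} {u : Fin k → Fin n} {a : ℕ} :
    a ∈ freeOffers O u ↔ (∃ j, (u j : ℕ) = a) ∧ a ∉ O := by
  simp [freeOffers]

theorem nextBin_mem_freeOffers {O : Finset ℕ} {u : Fin k → Fin n}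
    (h : (freeOffers O u).Nonempty) : nextBin O u ∈ freeOffers O u := by
  rw [nextBin, dif_pos h]
  exact min'_mem _ h

theorem nextBin_notMem (O : Finset ℕ) (u : Fin k → Fin n) : nextBin O u ∉ O := by
  by_cases h : (freeOffers O u).Nonempty
  · exact (mem_freeOffers.1 (nextBin_mem_freeOffers h)).2
  · rw [nextBin, dif_neg h]
    exact firstFree_notMem O

theorem range_nextBin_subset (O : Finset ℕ) (u : Fin k → Fin n) :
    range (nextBin O u) ⊆ O ∪ (skipped O u).map Fin.valEmbedding := by
  intro a ha
  rw [mem_range] at ha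
  by_contra! hmem
  simp only [mem_union, mem_map, skipped, mem_filter, mem_univ, true_and, not_or] at hmem
  obtain ⟨haO, haskip⟩ := hmem
  by_cases h : (freeOffers O u).Nonempty
  · obtain ⟨j, hj⟩ := (mem_freeOffers.1 (nextBin_mem_freeOffers h)).1
    rw [nextBin, dif_pos h] at ha
    refine haskip ⟨⟨a, by rw [nextBin, dif_pos h] at hj; omega⟩, ⟨haO, fun i hi => ?_⟩, rfl⟩
    exact ha.trans_le (min'_le _ _ (mem_freeOffers.2 ⟨⟨i, rfl⟩, hi⟩))
  · rw [nextBin, dif_neg h] at ha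
    exact haO (range_firstFree_subset O (mem_range.2 ha))

theorem nextBin_le (O : Finset ℕ) (u : Fin k → Fin n) :
    nextBin O u ≤ #O + #(skipped O u) := by
  simpa using (card_le_card (range_nextBin_subset O u)).trans (card_union_le _ _)

theorem excess_insert_le (c a : ℕ) (O : Finset ℕ) :
    excess c (insert a O) ≤ excess c O + (a - c) := by
  by_cases ha : a ∈ O
  · simp [ha]
  · rw [excess, sum_insert ha, add_comm, excess]

/-- Distinct overhanging bins have distinct overhangs, so a small excess leaves few of them; they
are as many as the holes below `#O`. -/
theorem card_range_sdiff_le {O : Finset ℕ} {h j : ℕ} (hh : 0 < h) (hO : excess #O O ≤ h * j) :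
    #(range #O \ O) ≤ h + j := by
  have hnear : #{a ∈ O \ range #O | a < #O + h} ≤ h := by
    calc _ ≤ #(Ico #O (#O + h)) := card_le_card fun a => by
            simp only [mem_filter, mem_sdiff, mem_range, mem_Ico]
            omega
      _ = h := by simp
  have hfar : #{a ∈ O \ range #O | ¬ a < #O + h} ≤ j := by
    refine Nat.le_of_mul_le_mul_left ?_ hh
    calc h * #{a ∈ O \ range #O | ¬ a < #O + h}
        ≤ ∑ a ∈ O \ range #O with ¬ a < #O + h, (a - #O) := by
          rw [mul_comm, ← smul_eq_mul]
          refine card_nsmul_le_sum _ _ _ fun a ha => ?_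
          rw [mem_filter] at ha
          omega
      _ ≤ excess #O O := sum_le_sum_of_subset ((filter_subset _ _).trans sdiff_subset)
      _ ≤ h * j := hO
  rw [card_sdiff_comm (card_range _), ← card_filter_add_card_filter_not (· < #O + h)]
  exact add_le_add hnear hfar

end Bins

section Algorithm

variable {n k b : ℕ} {q : ℕ}

/-- The occupied set after a ball has been placed. -/
noncomputable def place (O : Finset ℕ) (u : Fin k → Fin n) : Finset ℕ := insert (nextBin O u) O

/-- The occupied set after its smallest free bin has been given up as wasted. -/
noncomputable def sweep (O : Finset ℕ) : Finset ℕ := insert (firstFree O) O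

/-- One round of the algorithm: place ball `t`, and sweep in every `q`-th round. -/
noncomputable def advance (q t : ℕ) (O : Finset ℕ) (u : Fin k → Fin n) : Finset ℕ :=
  if q ∣ t + 1 then sweep (place O u) else place O u

/-- The transition function of the algorithm whose states are pairs of a round number and the set
of occupied (or wasted) bins. -/
noncomputable def step (q : ℕ) (s : ℕ × Finset ℕ) (u : Fin k → Fin n) : ℕ × Finset ℕ :=
  (s.1 + 1, advance q s.1 s.2 u)

/-- The choice function of the algorithm: an index at which `nextBin` is offered, and an
arbitrary index if there is none. -/
noncomputable def chosenIndex [NeZero k] (s : ℕ × Finset ℕ) (u : Fin k → Fin n) : Fin k :=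
  Function.invFun (fun j => (u j : ℕ)) (nextBin s.2 u)

/-- The set of occupied (or wasted) bins before round `t`. -/
noncomputable def occupied (q : ℕ) (ω : Fin b → Fin k → Fin n) (t : ℕ) : Finset ℕ :=
  (memState (step q) (0, ∅) ω t).2

/-- The number of bins that are occupied or wasted before round `t`. -/
def load (q t : ℕ) : ℕ := t + t / q

theorem card_place (O : Finset ℕ) (u : Fin k → Fin n) : #(place O u) = #O + 1 :=
  card_insert_of_notMem (nextBin_notMem O u)

theorem card_sweep (O : Finset ℕ) : #(sweep O) = #O + 1 :=
  card_insert_of_notMem (firstFree_notMem O)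

theorem card_advance (q t : ℕ) (O : Finset ℕ) (u : Fin k → Fin n) :
    #(advance q t O u) = #O + 1 + if q ∣ t + 1 then 1 else 0 := by
  rw [advance]
  split_ifs
  · rw [card_sweep, card_place]
  · rw [card_place, add_zero]

theorem place_subset_advance (q t : ℕ) (O : Finset ℕ) (u : Fin k → Fin n) :
    place O u ⊆ advance q t O u := by
  rw [advance]
  split_ifs
  exacts [subset_insert _ _, Subset.rfl]

theorem excess_advance_le {c t : ℕ} {O : Finset ℕ} (u : Fin k → Fin n) (hc : #O + 1 ≤ c) :
    excess c (advance q t O u) ≤ excess c O + (#O + #(skipped O u) - c) := by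
  have hplace : excess c (place O u) ≤ excess c O + (#O + #(skipped O u) - c) :=
    (excess_insert_le c _ O).trans (by gcongr; exact nextBin_le O u)
  have hsweep : excess c (sweep (place O u)) ≤ excess c (place O u) := by
    have hfirst : firstFree (place O u) ≤ c :=
      (firstFree_le_card _).trans ((card_place O u).trans_le hc)
    simpa [sweep, Nat.sub_eq_zero_of_le hfirst] using excess_insert_le c (firstFree (place O u)) _
  rw [advance]
  split_ifs
  exacts [hsweep.trans hplace, hplace]

theorem card_range_sdiff_sweep_le (c : ℕ) (O : Finset ℕ) :
    #(range c \ sweep O) ≤ #(range c \ O) - 1 := by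
  rw [sweep, sdiff_insert]
  rcases (range c \ O).eq_empty_or_nonempty with h | ⟨a, ha⟩
  · simp [h]
  · rw [mem_sdiff, mem_range] at ha
    rw [card_erase_of_mem]
    exact mem_sdiff.2 ⟨mem_range.2 ((firstFree_le ha.2).trans_lt ha.1), firstFree_notMem O⟩

theorem card_range_sdiff_advance_le (c t : ℕ) (O : Finset ℕ) (u : Fin k → Fin n) :
    #(range c \ advance q t O u) ≤ #(range c \ O) - if q ∣ t + 1 then 1 else 0 := by
  have hplace : #(range c \ place O u) ≤ #(range c \ O) :=
    card_le_card (sdiff_subset_sdiff Subset.rfl (subset_insert _ _))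
  rw [advance]
  split_ifs
  · exact (card_range_sdiff_sweep_le c _).trans (Nat.sub_le_sub_right hplace 1)
  · exact hplace

theorem load_succ (q t : ℕ) : load q (t + 1) = load q t + 1 + if q ∣ t + 1 then 1 else 0 := by
  rw [load, load, Nat.succ_div]
  ring

theorem memState_step_eq {ω : Fin b → Fin k → Fin n} {t : ℕ} (ht : t ≤ b) :
    memState (step q) (0, ∅) ω t = (t, occupied q ω t) := by
  refine Prod.ext ?_ rfl
  induction t with
  | zero => rfl
  | succ t ih => rw [memState_succ _ _ ω ⟨t, ht⟩, step, ih (by omega)]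

variable (ω : Fin b → Fin k → Fin n)

theorem occupied_succ (i : Fin b) :
    occupied q ω (i + 1) = advance q i (occupied q ω i) (ω i) := by
  rw [occupied, memState_succ, memState_step_eq i.2.le, step]

theorem occupied_update {i : Fin b} {t : ℕ} (ht : t ≤ i) (u : Fin k → Fin n) :
    occupied q (Function.update ω i u) t = occupied q ω t := by
  refine congrArg Prod.snd (memState_congr _ _ fun j hj => Function.update_of_ne ?_ _ _)
  exact Fin.ne_of_lt (hj.trans_le ht)

theorem card_occupied {t : ℕ} (ht : t ≤ b) : #(occupied q ω t) = load q t := by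
  induction t with
  | zero => simp [occupied, memState, load]
  | succ t ih =>
    rw [occupied_succ ω ⟨t, ht⟩, card_advance, ih (by omega), load_succ]

theorem occupied_mono : Monotone (occupied q ω) :=
  monotone_nat_of_le_succ fun t => by
    by_cases ht : t < b
    · rw [occupied_succ ω ⟨t, ht⟩]
      exact (subset_insert _ _).trans (place_subset_advance _ _ _ _)
    · rw [occupied, occupied, memState, dif_neg ht]

theorem nextBin_mem_occupied {i : Fin b} {t : ℕ} (h : (i : ℕ) < t) :
    nextBin (occupied q ω i) (ω i) ∈ occupied q ω t := by
  refine occupied_mono ω h ?_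
  rw [occupied_succ]
  exact place_subset_advance _ _ _ _ (mem_insert_self _ _)

/-- The number of bins skipped in round `s`. -/
noncomputable def numSkipped (q : ℕ) (ω : Fin b → Fin k → Fin n) (s : ℕ) : ℕ :=
  if h : s < b then #(skipped (occupied q ω s) (ω ⟨s, h⟩)) else 0

theorem excess_occupied_le_sum {c t : ℕ} (ht : t ≤ b) (hc : load q t ≤ c) :
    excess c (occupied q ω t) ≤ ∑ s ∈ range t, (load q s + numSkipped q ω s - c) := by
  induction t with
  | zero => simp [occupied, memState, excess]
  | succ t ih =>
    have hload : load q t + 1 ≤ c := by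
      rw [load_succ] at hc
      omega
    have hcard := card_occupied (q := q) ω (t := t) (by omega)
    have hskip : numSkipped q ω t = #(skipped (occupied q ω t) (ω ⟨t, ht⟩)) := dif_pos ht
    rw [occupied_succ ω ⟨t, ht⟩, sum_range_succ, hskip, ← hcard]
    exact (excess_advance_le (ω ⟨t, ht⟩) (hcard ▸ hload)).trans
      (Nat.add_le_add_right (ih (by omega) (by omega)) _)

theorem excess_occupied_le {t : ℕ} (ht : t ≤ b) :
    excess (load q t) (occupied q ω t) ≤ ∑ s ∈ range t, (numSkipped q ω s - (t - s)) := by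
  refine (excess_occupied_le_sum ω ht le_rfl).trans (sum_le_sum fun s hs => ?_)
  have hst : s < t := mem_range.1 hs
  have hdiv : s / q ≤ t / q := Nat.div_le_div_right hst.le
  simp only [load]
  omega

theorem card_range_sdiff_occupied_le (c : ℕ) {r t : ℕ} (hr : r ≤ t) (ht : t ≤ b) :
    #(range c \ occupied q ω t) ≤ #(range c \ occupied q ω r) - (t / q - r / q) := by
  induction t, hr using Nat.le_induction with
  | base => simp
  | succ t hrt ih =>
    have hdiv : r / q ≤ t / q := Nat.div_le_div_right hrt
    have hstep := card_range_sdiff_advance_le (q := q) c t (occupied q ω t) (ω ⟨t, ht⟩)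
    have ih := ih (by omega)
    rw [occupied_succ ω ⟨t, ht⟩, Nat.succ_div]
    dsimp only
    omega

/-- In the `2 * h * q` rounds before round `t` there are `2 * h` sweeps, which suffice to fill the
at most `2 * h` holes that a small excess allows. -/
theorem range_subset_occupied {h t : ℕ} (hq : 0 < q) (hh : 0 < h) (ht : t ≤ b)
    (hexcess : ∀ r ≤ b, excess (load q r) (occupied q ω r) ≤ h ^ 2) :
    range (load q t - 2 * h * (q + 1)) ⊆ occupied q ω t := by
  rcases lt_or_ge t (2 * h * q) with hlt | hge
  · have hdiv : t / q < 2 * h := (Nat.div_lt_iff_lt_mul hq).2 hlt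
    have hload : load q t - 2 * h * (q + 1) = 0 := by
      rw [load, mul_add_one]
      omega
    simp [hload]
  · obtain ⟨r, rfl⟩ := Nat.exists_eq_add_of_le' hge
    have hdiv : (r + 2 * h * q) / q = r / q + 2 * h := Nat.add_mul_div_right _ _ hq
    have hload : load q (r + 2 * h * q) - 2 * h * (q + 1) = load q r :=
      Nat.sub_eq_of_eq_add (by rw [load, hdiv, load]; ring)
    have hr : r ≤ b := (r.le_add_right _).trans ht
    have hholes : #(range (load q r) \ occupied q ω r) ≤ h + h := by
      have hcard := card_occupied (q := q) ω hr
      rw [← hcard]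
      exact card_range_sdiff_le hh (by rw [hcard, ← sq]; exact hexcess r hr)
    have hfilled := card_range_sdiff_occupied_le (q := q) ω (load q r) (r.le_add_right _) ht
    rw [hload, ← sdiff_eq_empty_iff_subset, ← card_eq_zero]
    omega

theorem memPlace_step_chosenIndex [NeZero k] {i : Fin b}
    (h : ∃ j : Fin k, (ω i j : ℕ) ∉ occupied q ω i) :
    (memPlace (step q) chosenIndex (0, ∅) ω i : ℕ) = nextBin (occupied q ω i) (ω i) := by
  have hfree : (freeOffers (occupied q ω i) (ω i)).Nonempty :=
    h.imp' (fun j => (ω i j : ℕ)) fun j hj => mem_freeOffers.2 ⟨⟨j, rfl⟩, hj⟩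
  rw [memPlace, memState_step_eq i.2.le]
  exact Function.invFun_eq (mem_freeOffers.1 (nextBin_mem_freeOffers hfree)).1

theorem injective_memPlace_step [NeZero k] (h : ∀ i : Fin b, ∃ j, (ω i j : ℕ) ∉ occupied q ω i) :
    Function.Injective (memPlace (step q) chosenIndex (0, ∅) ω) := by
  have hne {i j : Fin b} (hij : i < j) : memPlace (step q) chosenIndex (0, ∅) ω i ≠
      memPlace (step q) chosenIndex (0, ∅) ω j := fun heq => by
    have heq := congrArg Fin.val heq
    rw [memPlace_step_chosenIndex ω (h i), memPlace_step_chosenIndex ω (h j)] at heq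
    exact nextBin_notMem (occupied q ω j) (ω j) (heq ▸ nextBin_mem_occupied ω hij)
  intro i j heq
  by_contra hij
  rcases lt_or_gt_of_ne hij with hlt | hgt
  exacts [hne hlt heq, hne hgt heq.symm]

end Algorithm

section CompactStates

/-- The finite sets of natural numbers whose sum is at most `E`. -/
def boundedSum (E : ℕ) : Finset (Finset ℕ) := {T ∈ (range (E + 1)).powerset | ∑ a ∈ T, a ≤ E}

/-- The sets that contain `range (c - L)` and overhang the threshold `c` by at most `E` in total,
each encoded by its trace on the window `Ico (c - L) c` and by its set of overhangs. -/
def compactSets (c L E : ℕ) : Finset (Finset ℕ) :=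
  image₂ (fun W T => range (c - L) ∪ W ∪ T.image (c + ·)) (Ico (c - L) c).powerset (boundedSum E)

/-- The states of the algorithm in `b` rounds whose occupied sets are compact. -/
def compactStates (q b L E : ℕ) : Finset (ℕ × Finset ℕ) :=
  (range (b + 1)).biUnion fun t => (compactSets (load q t) L E).image (Prod.mk t)

/-- Rankin's trick: a set of sum at most `E` has weight at least `1` under
`T ↦ exp (θ * (E - ∑ a ∈ T, a))`, and the total weight of all sets is a product. -/
theorem card_boundedSum_le {θ : ℝ} (hθ : 0 < θ) (E : ℕ) :
    (#(boundedSum E) : ℝ) ≤ Real.exp (θ * E + (1 + 1 / θ)) := by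
  calc (#(boundedSum E) : ℝ)
      = ∑ T ∈ boundedSum E, 1 := by simp
    _ ≤ ∑ T ∈ boundedSum E, Real.exp (θ * E) * ∏ a ∈ T, Real.exp (-(θ * a)) := by
        refine sum_le_sum fun T hT => ?_
        have hsum : ∑ a ∈ T, (a : ℝ) ≤ E := by
          rw [← Nat.cast_sum]
          exact Nat.cast_le.2 (mem_filter.1 hT).2
        rw [← Real.exp_sum, ← Real.exp_add, sum_neg_distrib, ← mul_sum]
        exact Real.one_le_exp (by nlinarith)
    _ ≤ ∑ T ∈ (range (E + 1)).powerset, Real.exp (θ * E) * ∏ a ∈ T, Real.exp (-(θ * a)) :=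
        sum_le_sum_of_subset_of_nonneg (filter_subset _ _) fun _ _ _ => by positivity
    _ = Real.exp (θ * E) * ∏ a ∈ range (E + 1), (1 + Real.exp (-(θ * a))) := by
        rw [prod_one_add, mul_sum]
    _ ≤ Real.exp (θ * E) * Real.exp (1 + 1 / θ) := by
        gcongr
        exact prod_one_add_exp_neg_mul_le hθ _
    _ = Real.exp (θ * E + (1 + 1 / θ)) := (Real.exp_add _ _).symm

theorem mem_boundedSum {E : ℕ} {T : Finset ℕ} (h : ∑ a ∈ T, a ≤ E) : T ∈ boundedSum E := by
  refine mem_filter.2 ⟨mem_powerset.2 fun a ha => mem_range.2 (Nat.lt_succ_of_le ?_), h⟩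
  exact (single_le_sum (fun _ _ => Nat.zero_le _) ha).trans h

theorem mem_compactSets {c L E : ℕ} {O : Finset ℕ} (hrange : range (c - L) ⊆ O)
    (hexcess : excess c O ≤ E) : O ∈ compactSets c L E := by
  have hinj : Set.InjOn (· - c) (↑{a ∈ O | c ≤ a} : Set ℕ) := fun a ha a' ha' heq => by
    simp only [coe_filter, Set.mem_ofPred_eq] at ha ha' heq
    omega
  refine mem_image₂.2 ⟨O ∩ Ico (c - L) c, mem_powerset.2 inter_subset_right,
    {a ∈ O | c ≤ a}.image (· - c), mem_boundedSum ?_, ?_⟩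
  · rw [sum_image hinj]
    exact (sum_le_sum_of_subset (filter_subset _ _)).trans hexcess
  · ext a
    have hlow : a < c - L → a ∈ O := fun ha => hrange (mem_range.2 ha)
    simp only [mem_union, mem_inter, mem_range, mem_Ico, mem_image, mem_filter]
    constructor
    · rintro ((ha | ha) | ⟨_, ⟨a', ⟨ha', hle⟩, rfl⟩, rfl⟩)
      · exact hlow ha
      · exact ha.1
      · rwa [Nat.add_sub_cancel' hle]
    · intro ha
      by_cases hac : c ≤ a
      · exact Or.inr ⟨a - c, ⟨a, ⟨ha, hac⟩, rfl⟩, Nat.add_sub_cancel' hac⟩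
      · by_cases haL : a < c - L
        · exact Or.inl (Or.inl haL)
        · exact Or.inl (Or.inr ⟨ha, by omega⟩)

theorem card_compactSets_le (c L E : ℕ) : #(compactSets c L E) ≤ 2 ^ L * #(boundedSum E) := by
  refine (card_image₂_le _ _ _).trans (Nat.mul_le_mul_right _ ?_)
  rw [card_powerset, Nat.card_Ico]
  exact Nat.pow_le_pow_right two_pos (by omega)

theorem mem_compactStates {q b L E t : ℕ} {O : Finset ℕ} (ht : t ≤ b)
    (hO : O ∈ compactSets (load q t) L E) : (t, O) ∈ compactStates q b L E :=
  mem_biUnion.2 ⟨t, mem_range.2 (Nat.lt_succ_of_le ht), mem_image_of_mem _ hO⟩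

theorem card_compactStates_le (q b L E : ℕ) :
    #(compactStates q b L E) ≤ (b + 1) * (2 ^ L * #(boundedSum E)) := by
  simpa [compactStates] using card_biUnion_le_card_mul (range (b + 1)) _ _ fun t _ =>
    card_image_le.trans (card_compactSets_le (load q t) L E)

end CompactStates

section Offers

variable {n k : ℕ}

/-- The law of the `k` offers of one round. -/
noncomputable abbrev offers (n k : ℕ) : Measure (Fin k → Fin n) :=
  Measure.pi fun _ => uniformFin n

theorem skipped_subset_total (O : Finset ℕ) (u v : Fin k → Fin n) :
    skipped O u ⊆ skipped O v ∨ skipped O v ⊆ skipped O u := by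
  refine or_iff_not_imp_left.2 fun huv y hy => ?_
  obtain ⟨x, hxu, hxv⟩ := not_subset.1 huv
  simp only [skipped, mem_filter, mem_univ, true_and, not_and, not_forall, not_lt] at hxu hxv hy ⊢
  obtain ⟨j, hj, hjx⟩ := hxv hxu.1
  exact ⟨hy.1, fun i hi => (hy.2 j hj).trans_le (hjx.trans (hxu.2 i hi).le)⟩

theorem notMem_skipped (O : Finset ℕ) (u : Fin k → Fin n) (j : Fin k) : u j ∉ skipped O u :=
  fun h => by
    simp only [skipped, mem_filter, mem_univ, true_and] at h
    exact lt_irrefl _ (h.2 j h.1)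

theorem uniformFin_real_coe (A : Finset (Fin n)) : (uniformFin n).real A = #A / n := by
  rw [uniformFin, measureReal_def, Measure.smul_apply, Measure.count_apply_finset]
  simp [div_eq_inv_mul]

variable [NeZero n]

instance isProbabilityMeasure_uniformFin : IsProbabilityMeasure (uniformFin n) := ⟨by
  rw [uniformFin, Measure.smul_apply, Measure.count_univ, smul_eq_mul,
    ENat.card_eq_coe_fintype_card, Fintype.card_fin]
  exact ENNReal.inv_mul_cancel (by simp [NeZero.ne n]) (by simp)⟩

theorem offers_real_forall_mem (A : Finset (Fin n)) :
    (offers n k).real {u | ∀ j, u j ∈ A} = (#A / n : ℝ) ^ k := by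
  have hpi : {u : Fin k → Fin n | ∀ j, u j ∈ A} = Set.univ.pi fun _ => (A : Set (Fin n)) := by
    ext u
    simp
  rw [hpi, measureReal_def, Measure.pi_pi, prod_const, card_univ, Fintype.card_fin,
    ENNReal.toReal_pow, ← measureReal_def, uniformFin_real_coe]

/-- The sets of skipped bins form a chain, so all of those with at least `g` elements contain the
smallest one, whose bins are then offered in none of the corresponding rounds. -/
theorem offers_real_le_card_skipped_le (O : Finset ℕ) (g : ℕ) :
    (offers n k).real {u | g ≤ #(skipped O u)} ≤ Real.exp (-(k * g / n)) := by
  rcases {u : Fin k → Fin n | g ≤ #(skipped O u)}.eq_empty_or_nonempty with hempty | hne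
  · simpa [hempty] using Real.exp_nonneg _
  obtain ⟨v, hv, hmin⟩ := Set.exists_min_image _ (fun u => #(skipped O u)) (Set.toFinite _) hne
  have hn : (0 : ℝ) < n := Nat.cast_pos.2 (NeZero.pos n)
  have hsub : {u | g ≤ #(skipped O u)} ⊆ {u | ∀ j, u j ∈ (skipped O v)ᶜ} := fun u hu j => by
    refine mem_compl.2 fun hj => notMem_skipped O u j ?_
    rcases skipped_subset_total O v u with h | h
    · exact h hj
    · rwa [eq_of_subset_of_card_le h (hmin u hu)]
  have hcard : (#(skipped O v)ᶜ : ℝ) ≤ n - g := by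
    have hg : (g : ℝ) ≤ #(skipped O v) := Nat.cast_le.2 hv
    rw [card_compl, Fintype.card_fin, Nat.cast_sub (by simpa using card_le_univ (skipped O v))]
    linarith
  calc (offers n k).real {u | g ≤ #(skipped O u)}
      ≤ (offers n k).real {u | ∀ j, u j ∈ (skipped O v)ᶜ} := measureReal_mono hsub
    _ = (#(skipped O v)ᶜ / n : ℝ) ^ k := offers_real_forall_mem _
    _ ≤ Real.exp (-(g / n)) ^ k := by
        gcongr
        calc (#(skipped O v)ᶜ / n : ℝ) ≤ (n - g) / n := by gcongr
          _ = 1 - g / n := by rw [sub_div, div_self hn.ne']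
          _ ≤ Real.exp (-(g / n)) := Real.one_sub_le_exp_neg _
    _ = Real.exp (-(k * g / n)) := by
        rw [← Real.exp_nat_mul]
        ring_nf

theorem integral_exp_card_skipped_sub_le {θ : ℝ} (hθ : 0 ≤ θ) (hk : 2 * θ * n ≤ k)
    (O : Finset ℕ) (r : ℕ) :
    ∫ u, Real.exp (θ * (#(skipped O u) - r : ℕ)) ∂offers n k ≤ 1 + Real.exp (-(θ * r)) := by
  have hn : (0 : ℝ) < n := Nat.cast_pos.2 (NeZero.pos n)
  refine integral_exp_mul_sub_le (G := fun u => #(skipped O u)) (N := n) .of_discrete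
    (fun u => by simpa using card_le_univ (skipped O u)) hθ (fun g => ?_) r
  refine (offers_real_le_card_skipped_le O g).trans (Real.exp_le_exp.2 (neg_le_neg ?_))
  rw [mul_div_right_comm]
  gcongr
  rwa [le_div_iff₀ hn]

end Offers

section Rounds

variable {n k b q : ℕ}

/-- The law of the offers of `b` rounds. -/
noncomputable abbrev rounds (n k b : ℕ) : Measure (Fin b → Fin k → Fin n) :=
  Measure.pi fun _ => offers n k

/-- The event that the algorithm works and stays in compact states: all excesses are at most
`h ^ 2`, and every round offers a free bin. -/
structure IsTame (q h : ℕ) (ω : Fin b → Fin k → Fin n) : Prop where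
  excess_le : ∀ t ≤ b, excess (load q t) (occupied q ω t) ≤ h ^ 2
  exists_free : ∀ i : Fin b, ∃ j, (ω i j : ℕ) ∉ occupied q ω i

theorem numSkipped_update_of_lt {i : Fin b} {s : ℕ} (hs : s < i) (ω : Fin b → Fin k → Fin n)
    (u : Fin k → Fin n) : numSkipped q (Function.update ω i u) s = numSkipped q ω s := by
  have hsb : s < b := hs.trans i.2
  have hne : (⟨s, hsb⟩ : Fin b) ≠ i := Fin.ne_of_lt hs
  simp only [numSkipped, dif_pos hsb, occupied_update ω hs.le, Function.update_of_ne hne]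

theorem numSkipped_update_self (i : Fin b) (ω : Fin b → Fin k → Fin n) (u : Fin k → Fin n) :
    numSkipped q (Function.update ω i u) i = #(skipped (occupied q ω i) u) := by
  simp only [numSkipped, dif_pos i.2, occupied_update ω le_rfl, Fin.eta, Function.update_self]

variable [NeZero n]

theorem integral_exp_sum_numSkipped_sub_le {t : ℕ} (ht : t ≤ b) {θ : ℝ} (hθ : 0 < θ)
    (hk : 2 * θ * n ≤ k) :
    ∫ ω, Real.exp (θ * (∑ s ∈ range t, (numSkipped q ω s - (t - s)) : ℕ)) ∂rounds n k b ≤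
      Real.exp (1 + 1 / θ) := by
  have hinj : Set.InjOn (t - ·) (range t : Set ℕ) := fun s hs s' hs' heq => by
    simp only [coe_range, Set.mem_Iio] at hs hs' heq
    omega
  calc ∫ ω, Real.exp (θ * (∑ s ∈ range t, (numSkipped q ω s - (t - s)) : ℕ)) ∂rounds n k b
      = ∫ ω, ∏ s ∈ range t, Real.exp (θ * (numSkipped q ω s - (t - s) : ℕ)) ∂rounds n k b := by
        simp only [Nat.cast_sum, mul_sum, Real.exp_sum]
    _ ≤ ∏ s ∈ range t, (1 + Real.exp (-(θ * (t - s : ℕ)))) := by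
        refine integral_prod_range_le_prod
          (X := fun s ω => Real.exp (θ * (numSkipped q ω s - (t - s) : ℕ))) ht
          (fun _ _ => Real.exp_nonneg _) (fun _ _ => .of_finite) (fun i s hs ω u => ?_)
          fun i ω => ?_
        · rw [numSkipped_update_of_lt hs]
        · simp only [numSkipped_update_self]
          exact integral_exp_card_skipped_sub_le hθ.le hk _ _
    _ = ∏ r ∈ (range t).image (t - ·), (1 + Real.exp (-(θ * r))) := by rw [prod_image hinj]
    _ ≤ Real.exp (1 + 1 / θ) := prod_one_add_exp_neg_mul_le hθ _

theorem rounds_real_lt_excess_le {t : ℕ} (ht : t ≤ b) {θ : ℝ} (hθ : 0 < θ) (hk : 2 * θ * n ≤ k)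
    (E : ℕ) :
    (rounds n k b).real {ω | E < excess (load q t) (occupied q ω t)} ≤
      Real.exp (-(θ * E) + (1 + 1 / θ)) := by
  let Y (ω : Fin b → Fin k → Fin n) : ℝ := (∑ s ∈ range t, (numSkipped q ω s - (t - s)) : ℕ)
  calc (rounds n k b).real {ω | E < excess (load q t) (occupied q ω t)}
      ≤ (rounds n k b).real {ω | (E : ℝ) ≤ Y ω} :=
        measureReal_mono <| Set.ofPred_subset_ofPred.2 fun ω hω =>
          Nat.cast_le.2 (hω.le.trans (excess_occupied_le ω ht))
    _ ≤ Real.exp (-θ * E) * ProbabilityTheory.mgf Y (rounds n k b) θ :=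
        ProbabilityTheory.measure_ge_le_exp_mul_mgf _ hθ.le .of_finite
    _ ≤ Real.exp (-θ * E) * Real.exp (1 + 1 / θ) := by
        gcongr
        exact integral_exp_sum_numSkipped_sub_le ht hθ hk
    _ = Real.exp (-(θ * E) + (1 + 1 / θ)) := by rw [← Real.exp_add, neg_mul]

theorem rounds_real_forall_mem_occupied_le (i : Fin b) {β : ℝ} (hβ : load q i ≤ β * n) :
    (rounds n k b).real {ω | ∀ j, (ω i j : ℕ) ∈ occupied q ω i} ≤ β ^ k := by
  have hn : (0 : ℝ) < n := Nat.cast_pos.2 (NeZero.pos n)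
  refine measureReal_pi_le_of_forall_update_le i .of_discrete fun ω => ?_
  let A : Finset (Fin n) := {x | (x : ℕ) ∈ occupied q ω i}
  have hA : (#A : ℝ) ≤ β * n := by
    refine le_trans (Nat.cast_le.2 ?_) hβ
    rw [← card_occupied ω i.2.le]
    exact card_le_card_of_injOn Fin.val (fun x hx => by simpa [A] using hx) Fin.val_injective.injOn
  have hsection : {u | Function.update ω i u ∈ {ω | ∀ j, (ω i j : ℕ) ∈ occupied q ω i}} =
      {u | ∀ j, u j ∈ A} := by
    ext u
    simp [A, occupied_update ω (le_refl (i : ℕ))]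
  rw [hsection, offers_real_forall_mem]
  gcongr
  rwa [div_le_iff₀ hn]

theorem rounds_real_not_isTame_le {h : ℕ} (hh : 0 < h) (hk : (4 * n : ℝ) ≤ k * h) {β : ℝ}
    (hβ : ∀ t < b, load q t ≤ β * n) :
    (rounds n k b).real {ω | ¬ IsTame q h ω} ≤
      (b + 1) * Real.exp (1 - 3 / 2 * h) + b * β ^ k := by
  have hh' : (0 : ℝ) < h := Nat.cast_pos.2 hh
  have hθk : 2 * (2 / h : ℝ) * n ≤ k := by
    calc 2 * (2 / h : ℝ) * n = 4 * n / h := by ring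
      _ ≤ k := (div_le_iff₀ hh').2 hk
  have hexponent : -(2 / h * (h ^ 2 : ℕ)) + (1 + 1 / (2 / h)) = 1 - 3 / 2 * (h : ℝ) := by
    push_cast
    field_simp
    ring
  have hsub : {ω : Fin b → Fin k → Fin n | ¬ IsTame q h ω} ⊆
      (⋃ t ∈ range (b + 1), {ω | h ^ 2 < excess (load q t) (occupied q ω t)}) ∪
        ⋃ i : Fin b, {ω | ∀ j, (ω i j : ℕ) ∈ occupied q ω i} := fun ω hω => by
    by_contra hnot
    simp only [Set.mem_union, Set.mem_iUnion, mem_range, Set.mem_ofPred_eq, not_or, not_exists,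
      not_lt, not_forall] at hnot
    exact hω ⟨fun t ht => hnot.1 t (Nat.lt_succ_of_le ht), hnot.2⟩
  calc (rounds n k b).real {ω | ¬ IsTame q h ω}
      ≤ ∑ t ∈ range (b + 1),
            (rounds n k b).real {ω | h ^ 2 < excess (load q t) (occupied q ω t)} +
          ∑ i : Fin b, (rounds n k b).real {ω | ∀ j, (ω i j : ℕ) ∈ occupied q ω i} :=
        ((measureReal_mono hsub).trans (measureReal_union_le _ _)).trans
          (add_le_add (measureReal_biUnion_finset_le _ _) (measureReal_iUnion_fintype_le _))
    _ ≤ ∑ t ∈ range (b + 1), Real.exp (1 - 3 / 2 * h) + ∑ _ : Fin b, β ^ k := by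
        gcongr with t ht i
        · rw [← hexponent]
          exact rounds_real_lt_excess_le (Nat.le_of_lt_succ (mem_range.1 ht)) (by positivity) hθk _
        · exact rounds_real_forall_mem_occupied_le i (hβ i i.2)
    _ = (b + 1) * Real.exp (1 - 3 / 2 * h) + b * β ^ k := by simp

end Rounds

section FiniteMemory

variable {n k b q h : ℕ}

theorem memState_step_mem_compactStates (hq : 0 < q) (hh : 0 < h) {ω : Fin b → Fin k → Fin n}
    (hω : IsTame q h ω) {t : ℕ} (ht : t ≤ b) :
    memState (step q) (0, ∅) ω t ∈ compactStates q b (2 * h * (q + 1)) (h ^ 2) := by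
  rw [memState_step_eq ht]
  exact mem_compactStates ht
    (mem_compactSets (range_subset_occupied ω hq hh ht hω.excess_le) (hω.excess_le t ht))

theorem zero_empty_mem_compactStates (q b L E : ℕ) : (0, ∅) ∈ compactStates q b L E :=
  mem_compactStates b.zero_le
    (mem_compactSets (by simp [load]) (by simp [excess]))

theorem card_compactStates_le_exp (hh : 0 < h) :
    (#(compactStates q b (2 * h * (q + 1)) (h ^ 2)) : ℝ) ≤
      (b + 1) * (2 ^ (2 * h * (q + 1)) * Real.exp (5 / 2 * h + 1)) := by
  have hh' : (0 : ℝ) < h := Nat.cast_pos.2 hh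
  have hexponent : 2 / h * (h ^ 2 : ℕ) + (1 + 1 / (2 / h)) = 5 / 2 * (h : ℝ) + 1 := by
    push_cast
    field_simp
    ring
  refine (Nat.cast_le.2 (card_compactStates_le _ _ _ _)).trans ?_
  push_cast
  gcongr
  rw [← hexponent]
  exact card_boundedSum_le (div_pos two_pos hh') _

theorem exists_injective_memPlace [NeZero n] (hq : 0 < q) (hh : 0 < h)
    (hk : (4 * n : ℝ) ≤ k * h) {β : ℝ} (hβ : ∀ t < b, load q t ≤ β * n) :
    ∃ (S : Type) (_ : Fintype S) (s0 : S)
      (σ : S → (Fin k → Fin n) → S) (a : S → (Fin k → Fin n) → Fin k),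
      (Fintype.card S : ℝ) ≤ (b + 1) * (2 ^ (2 * h * (q + 1)) * Real.exp (5 / 2 * h + 1)) ∧
      1 - ((b + 1) * Real.exp (1 - 3 / 2 * h) + b * β ^ k) ≤
        (rounds n k b).real {ω | Function.Injective fun t => memPlace σ a s0 ω t} := by
  have : NeZero k := ⟨fun hk0 => by
    have hn : (0 : ℝ) < n := Nat.cast_pos.2 (NeZero.pos n)
    rw [hk0, Nat.cast_zero, zero_mul] at hk
    linarith⟩
  let T := compactStates q b (2 * h * (q + 1)) (h ^ 2)
  let s0 : T := ⟨(0, ∅), zero_empty_mem_compactStates _ _ _ _⟩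
  have hinjective : {ω | IsTame q h ω} ⊆ {ω : Fin b → Fin k → Fin n | Function.Injective fun t =>
      memPlace (restrictTransition (step q) T) (fun s => chosenIndex s) s0 ω t} := fun ω hω => by
    have hplace (t : Fin b) : memPlace (restrictTransition (step q) T) (fun s => chosenIndex s)
        s0 ω t = memPlace (step q) chosenIndex (0, ∅) ω t :=
      memPlace_restrictTransition chosenIndex fun r hr =>
        memState_step_mem_compactStates hq hh hω (hr.trans t.2.le)
    simpa only [Set.mem_ofPred_eq, hplace] using injective_memPlace_step ω hω.exists_free
  refine ⟨T, inferInstance, s0, restrictTransition (step q) T, fun s => chosenIndex s, ?_, ?_⟩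
  · rw [Fintype.card_coe]
    exact card_compactStates_le_exp hh
  · have hcompl := probReal_compl_eq_one_sub (μ := rounds n k b)
      (s := {ω | ¬ IsTame q h ω}) .of_discrete
    calc 1 - ((b + 1) * Real.exp (1 - 3 / 2 * h) + b * β ^ k)
        ≤ 1 - (rounds n k b).real {ω | ¬ IsTame q h ω} :=
          sub_le_sub_left (rounds_real_not_isTame_le hh hk hβ) 1
      _ = (rounds n k b).real {ω | ¬ IsTame q h ω}ᶜ := hcompl.symm
      _ ≤ _ := measureReal_mono fun ω hω => hinjective (not_not.1 hω)

end FiniteMemory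

section Asymptotics

open Filter Topology

theorem load_le_of_lt_floor {δ : ℝ} (hδ : 0 ≤ δ) {n q t : ℕ} (ht : t < ⌊(1 - δ) * n⌋₊) :
    (load q t : ℝ) ≤ (1 - (δ - 1 / q)) * n := by
  have htδ : (t : ℝ) ≤ (1 - δ) * n := (Nat.lt_of_lt_floor ht).le
  have htn : (t : ℝ) ≤ n := htδ.trans (by nlinarith [(n.cast_nonneg : (0 : ℝ) ≤ n)])
  calc (load q t : ℝ) ≤ t + t / q := by
        rw [load, Nat.cast_add]
        gcongr
        exact Nat.cast_div_le
    _ ≤ (1 - δ) * n + n / q := by gcongr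
    _ = (1 - (δ - 1 / q)) * n := by ring

theorem floor_one_sub_mul_add_one_le {δ : ℝ} (hδ : 0 < δ) {n : ℕ} (hn : 0 < n) :
    ((⌊(1 - δ) * n⌋₊ : ℕ) + 1 : ℝ) ≤ n := by
  have hn' : (0 : ℝ) < n := Nat.cast_pos.2 hn
  have hfloor : ⌊(1 - δ) * n⌋₊ < n := (Nat.floor_lt' hn.ne').2 (by nlinarith)
  exact_mod_cast hfloor

theorem failure_bound_le {n b h k : ℕ} {γ c : ℝ} (hb : (b + 1 : ℝ) ≤ n)
    (hh : 2 * Real.log n ≤ h) (hγ : γ ≤ 1) (hk : (1 + c) * Real.log n ≤ k * γ) :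
    (b + 1) * Real.exp (1 - 3 / 2 * h) + b * (1 - γ) ^ k ≤
      Real.exp (1 - 2 * Real.log n) + Real.exp (-(c * Real.log n)) := by
  have hn : (0 : ℝ) < n := (by positivity : (0 : ℝ) < b + 1).trans_le hb
  have hexp : (n : ℝ) = Real.exp (Real.log n) := (Real.exp_log hn).symm
  have hexcess : (b + 1) * Real.exp (1 - 3 / 2 * h) ≤ Real.exp (1 - 2 * Real.log n) :=
    calc (b + 1) * Real.exp (1 - 3 / 2 * h)
        ≤ Real.exp (Real.log n) * Real.exp (1 - 3 / 2 * h) := by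
          rw [← hexp]
          gcongr
      _ ≤ Real.exp (1 - 2 * Real.log n) := by
          rw [← Real.exp_add]
          exact Real.exp_le_exp.2 (by linarith)
  have hblocked : b * (1 - γ) ^ k ≤ Real.exp (-(c * Real.log n)) :=
    calc b * (1 - γ) ^ k
        ≤ Real.exp (Real.log n) * Real.exp (-γ) ^ k := by
          rw [← hexp]
          refine mul_le_mul (by linarith) ?_ (pow_nonneg (sub_nonneg.2 hγ) k) n.cast_nonneg
          gcongr
          exact Real.one_sub_le_exp_neg γ
      _ ≤ Real.exp (-(c * Real.log n)) := by
          rw [← Real.exp_nat_mul, ← Real.exp_add]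
          exact Real.exp_le_exp.2 (by linarith)
  exact add_le_add hexcess hblocked

theorem tendsto_log_natCast_atTop : Tendsto (fun n : ℕ => Real.log n) atTop atTop :=
  Real.tendsto_log_atTop.comp tendsto_natCast_atTop_atTop

theorem tendsto_failure_bound {c : ℝ} (hc : 0 < c) :
    Tendsto (fun n : ℕ => Real.exp (1 - 2 * Real.log n) + Real.exp (-(c * Real.log n))) atTop
      (𝓝 0) := by
  have hmul {a : ℝ} (ha : 0 < a) : Tendsto (fun n : ℕ => -(a * Real.log n)) atTop atBot :=
    tendsto_neg_atTop_atBot.comp (tendsto_log_natCast_atTop.const_mul_atTop ha)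
  have hexcess : Tendsto (fun n : ℕ => Real.exp (1 - 2 * Real.log n)) atTop (𝓝 0) :=
    Real.tendsto_exp_atBot.comp (tendsto_atBot_add_const_left _ 1 (hmul two_pos))
  simpa using hexcess.add (Real.tendsto_exp_atBot.comp (hmul hc))

theorem exists_one_div_le_gap {δ κ : ℝ} (hδ : 0 < δ) (hκ : 1 < κ) :
    ∃ q : ℕ, 0 < q ∧ δ / κ * (1 + (κ - 1) / 2) ≤ δ - 1 / q := by
  have hκ0 : 0 < κ := one_pos.trans hκ
  obtain ⟨r, hr⟩ := exists_nat_one_div_lt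
    (mul_pos (div_pos hδ hκ0) (half_pos (sub_pos.2 hκ)))
  refine ⟨r + 1, r.succ_pos, ?_⟩
  have hsplit : δ / κ * (1 + (κ - 1) / 2) = δ - δ / κ * ((κ - 1) / 2) := by
    field_simp
    ring
  push_cast
  linarith

theorem memory_bound_le_two_pow {n b h k m q : ℕ} (hk : 0 < k) (hlog : 1 ≤ Real.log n)
    (hb : (b + 1 : ℝ) ≤ n) (hh : (h : ℝ) ≤ 4 * n / k + 2 * Real.log n + 1)
    (hm : 18 * (2 * q + 5) * Real.log n ≤ m) (hkm : 18 * (2 * q + 5) * n ≤ (k : ℝ) * m) :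
    (b + 1) * (2 ^ (2 * h * (q + 1)) * Real.exp (5 / 2 * h + 1)) ≤ (2 : ℝ) ^ m := by
  have hn : (0 : ℝ) < n := (by positivity : (0 : ℝ) < b + 1).trans_le hb
  have hmk : 18 * (2 * q + 5) * (n / k) ≤ (m : ℝ) := by
    rw [← mul_div_assoc, div_le_iff₀' (Nat.cast_pos.2 hk)]
    exact hkm
  have hexponent : Real.log n + (2 * h * (q + 1) + (5 / 2 * h + 1)) ≤ m * (1 / 2 : ℝ) := by
    have hwidth : (2 * q + 5) * (h : ℝ) ≤ (2 * q + 5) * (4 * (n / k) + 3 * Real.log n) := by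
      rw [← mul_div_assoc]
      gcongr
      linarith
    nlinarith [(h.cast_nonneg : (0 : ℝ) ≤ h), mul_nonneg q.cast_nonneg (zero_le_one.trans hlog)]
  calc (b + 1) * (2 ^ (2 * h * (q + 1)) * Real.exp (5 / 2 * h + 1))
      ≤ Real.exp (Real.log n) *
          (Real.exp 1 ^ (2 * h * (q + 1)) * Real.exp (5 / 2 * h + 1)) := by
        rw [Real.exp_log hn]
        gcongr
        linarith [Real.add_one_le_exp 1]
    _ = Real.exp (Real.log n + (2 * h * (q + 1) + (5 / 2 * h + 1))) := by
        rw [← Real.exp_nat_mul, ← Real.exp_add, ← Real.exp_add]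
        push_cast
        ring_nf
    _ ≤ Real.exp (m * Real.log 2) := by
        refine Real.exp_le_exp.2 (hexponent.trans ?_)
        gcongr
        linarith [Real.log_two_gt_d9]
    _ = 2 ^ m := by rw [Real.exp_nat_mul, Real.exp_log two_pos]

end Asymptotics

end OnlineAllocation

open Filter OnlineAllocation in
theorem perfect_matching_upper_general {δ κ : ℝ} (hδ0 : 0 < δ) (hδ1 : δ < 1) (hκ : 1 < κ) :
    ∃ C : ℝ, 0 < C ∧ ∀ ε : ℝ, 0 < ε → ∀ᶠ n : ℕ in atTop, ∀ k m : ℕ,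
      κ / δ * Real.log n ≤ k →
      C * Real.log n ≤ m →
      C * n ≤ (k : ℝ) * m →
      ∃ (S : Type) (_ : Fintype S) (s0 : S)
        (σ : S → (Fin k → Fin n) → S) (a : S → (Fin k → Fin n) → Fin k),
        Fintype.card S ≤ 2 ^ m ∧
        1 - ε ≤ (rounds n k ⌊(1 - δ) * n⌋₊).real
          {ω | Function.Injective fun t => memPlace σ a s0 ω t} := by
  obtain ⟨q, hq, hgap⟩ := exists_one_div_le_gap hδ0 hκ
  refine ⟨18 * (2 * q + 5), by positivity, fun ε hε => ?_⟩
  filter_upwards [tendsto_log_natCast_atTop.eventually_ge_atTop 1,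
    (tendsto_failure_bound (half_pos (sub_pos.2 hκ))).eventually_lt_const hε]
    with n hlog hfail k m hk hm hkm
  have hn : 0 < n := Nat.pos_of_ne_zero fun h0 => by norm_num [h0] at hlog
  have : NeZero n := ⟨hn.ne'⟩
  have hk0 : (0 : ℝ) < k := (by positivity : 0 < κ / δ * Real.log n).trans_le hk
  have hrate : (1 + (κ - 1) / 2) * Real.log n ≤ k * (δ - 1 / q) :=
    calc (1 + (κ - 1) / 2) * Real.log n
        = κ / δ * Real.log n * (δ / κ * (1 + (κ - 1) / 2)) := by field_simp
      _ ≤ k * (δ - 1 / q) :=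
          mul_le_mul hk hgap (mul_nonneg (by positivity) (by linarith)) hk0.le
  have hb := floor_one_sub_mul_add_one_le hδ0 hn
  let h := ⌈4 * n / k + 2 * Real.log n⌉₊
  have hwidth : 4 * n / k + 2 * Real.log n ≤ h := Nat.le_ceil _
  obtain ⟨S, hS, s0, σ, a, hcard, hprob⟩ := exists_injective_memPlace (k := k) hq
    (Nat.ceil_pos.2 (by positivity)) ((div_le_iff₀' hk0).1 (le_of_add_le_of_nonneg_left hwidth
      (by positivity))) fun t ht => load_le_of_lt_floor hδ0.le ht
  refine ⟨S, hS, s0, σ, a, ?_, ?_⟩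
  · exact_mod_cast hcard.trans (memory_bound_le_two_pow (Nat.cast_pos.1 hk0) hlog hb
      (Nat.ceil_lt_add_one (by positivity)).le hm hkm)
  · have hfailure := failure_bound_le hb (le_of_add_le_of_nonneg_right hwidth (by positivity))
      ((sub_le_self δ (by positivity)).trans hδ1.le) hrate
    linarith

/-- Theorem 4 of the paper: fix `δ ∈ (0,1)`. There is a constant `C = C(δ) > 0` such that,
with probability tending to `1` as `n → ∞`, whenever `k ≥ (3/δ) log n`,
`m ≥ log n · log₂ log n` and `k m ≥ C n`, there is a memory-`m` online algorithm (a state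
space of size at most `2^m` with a transition function and a choice function) that, when
presented with `⌊(1-δ)n⌋` rounds of `k` i.i.d. uniform bin choices, places all balls in
distinct bins (a perfect allocation). -/
theorem perfect_matching_upper (δ : ℝ) (hδ0 : 0 < δ) (hδ1 : δ < 1) :
    ∃ C : ℝ, 0 < C ∧ ∀ ε : ℝ, 0 < ε → ∃ n₀ : ℕ, ∀ n : ℕ, n₀ ≤ n → ∀ k m : ℕ,
      (3 / δ) * Real.log n ≤ k →
      Real.log n * Real.logb 2 (Real.log n) ≤ m →
      C * n ≤ (k : ℝ) * m →
      ∃ (S : Type) (_ : Fintype S) (s0 : S)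
        (σ : S → (Fin k → Fin n) → S) (a : S → (Fin k → Fin n) → Fin k),
        Fintype.card S ≤ 2 ^ m ∧
        1 - ε ≤ ((Measure.pi fun _ : Fin (Nat.floor ((1 - δ) * n)) =>
              Measure.pi fun _ : Fin k => uniformFin n)
            {ω | Function.Injective fun t => memPlace σ a s0 ω t}).toReal := by
  obtain ⟨C, hC, hgeneral⟩ := perfect_matching_upper_general hδ0 hδ1 (κ := 3) (by norm_num)
  refine ⟨C, hC, fun ε hε => Filter.eventually_atTop.1 ?_⟩
  have hlog := OnlineAllocation.tendsto_log_natCast_atTop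
  filter_upwards [hgeneral ε hε, hlog.eventually_ge_atTop 0,
    ((Real.tendsto_logb_atTop one_lt_two).comp hlog).eventually_ge_atTop C]
    with n hn hlog0 hloglog k m hk hm
  exact hn k m hk ((mul_comm C _).trans_le (mul_le_mul_of_nonneg_left hloglog hlog0) |>.trans hm)
end
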